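/- arXiv:2412.02762 — 4 statements merged into one kernel-verified Lean document; each statement's English description precedes it below -/
import Mathlib

section
/- Let 0<s<1 and 0<r<1+2s, and let v:ℝ→ℝ be a bounded measurable function with v(x) = -|x|^r for -1≤x<0 and v(x) = x^r for 0≤x≤1. Then there exist constants c₁, c₂ ∈ ℝ, depending only on r and s, such that for every x ∈ (0, 1/2], (-Δ)^s v(x) = c₁ x^{r-2s} + c₂ x^r + c_s G(x) - c_s H(x), where G(x) := x^{r-2s} ∫_{1/(2x)}^{+∞} ((t+1)^r - (t-1)^r) t^{-1-2s} dt and H(x) := ∫_{ℝ∖(-1/2,1/2)} (v(x+y) - v(x)) |y|^{-1-2s} dy. -/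
open MeasureTheory Filter Set

/-- The normalizing constant `c_s` of the fractional Laplacian. -/
noncomputable def fracLapCoef (s : ℝ) : ℝ :=
  s * (4 : ℝ) ^ s * Real.Gamma (1 / 2 + s) / (Real.sqrt Real.pi * Real.Gamma (1 - s))

/-- `HasFracLapAt s u x L` means the principal value defining `(-Δ)^s u (x)`
exists and equals `L`. -/
def HasFracLapAt (s : ℝ) (u : ℝ → ℝ) (x L : ℝ) : Prop :=
  (∀ ε : ℝ, 0 < ε →
    MeasureTheory.IntegrableOn (fun y : ℝ => (u x - u y) / |x - y| ^ (1 + 2 * s))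
      {y : ℝ | ε < |y - x|}) ∧
  Filter.Tendsto (fun ε : ℝ =>
      fracLapCoef s * ∫ y in {y : ℝ | ε < |y - x|}, (u x - u y) / |x - y| ^ (1 + 2 * s))
    (nhdsWithin 0 (Set.Ioi 0)) (nhds L)

/-- `MemCalpha α Ω f` : `f ∈ C^α(Ω)`, i.e. `f` is continuously differentiable with bounded
derivatives up to order `⌊α⌋` on `Ω`, and its `⌊α⌋`-th derivative is Hölder continuous of
exponent `α - ⌊α⌋` on `Ω`. -/
def MemCalpha (α : ℝ) (Ω : Set ℝ) (f : ℝ → ℝ) : Prop :=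
  ContDiffOn ℝ (⌊α⌋₊ : ℕ) f Ω ∧
  (∀ k : ℕ, k ≤ ⌊α⌋₊ → ∃ C : ℝ, ∀ x ∈ Ω, |iteratedDerivWithin k f Ω x| ≤ C) ∧
  ∃ C : NNReal, HolderOnWith C (α - (⌊α⌋₊ : ℝ)).toNNReal (iteratedDerivWithin ⌊α⌋₊ f Ω) Ω


noncomputable def oddPow (r z : ℝ) : ℝ := if z < 0 then -(|z| ^ r) else z ^ r

noncomputable def ff (s r t : ℝ) : ℝ := (2 - (1 + t) ^ r - oddPow r (1 - t)) / t ^ (1 + 2 * s)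

noncomputable def gg (s r t : ℝ) : ℝ := ((t + 1) ^ r - (t - 1) ^ r) / t ^ (1 + 2 * s)

lemma oddPow_continuous {r : ℝ} (hr : 0 < r) : Continuous (oddPow r) := by
  unfold oddPow
  apply Continuous.if
  · intro a ha
    have : a = 0 := by
      have h2 : {x : ℝ | x < 0} = Iio 0 := rfl
      rw [h2, frontier_Iio] at ha
      simpa using ha
    subst this
    simp [Real.zero_rpow hr.ne']
  · exact ((continuous_abs.rpow_const (fun _ => Or.inr hr.le))).neg
  · exact continuous_id.rpow_const (fun _ => Or.inr hr.le)

lemma oddPow_scale {r a : ℝ} (ha : 0 < a) (z : ℝ) : oddPow r (a * z) = a ^ r * oddPow r z := by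
  unfold oddPow
  by_cases hz : z < 0
  · rw [if_pos hz, if_pos (mul_neg_of_pos_of_neg ha hz), abs_mul, abs_of_pos ha,
      Real.mul_rpow ha.le (abs_nonneg _)]; ring
  · push Not at hz
    rw [if_neg (by push Not; positivity), if_neg (not_lt.2 hz), Real.mul_rpow ha.le hz]

lemma second_diff {r : ℝ} : ∃ C : ℝ, ∀ t ∈ Icc (0 : ℝ) (1 / 2),
    |2 - (1 + t) ^ r - (1 - t) ^ r| ≤ C * t ^ 2 := by
  set h : ℝ → ℝ := fun t => 2 - (1 + t) ^ r - (1 - t) ^ r with hh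
  have hc : ContDiffOn ℝ (1 + 1 : ℕ) h (Icc 0 (1 / 2)) := by
    apply ContDiffOn.sub
    · apply ContDiffOn.sub contDiffOn_const
      apply ContDiffOn.rpow_const_of_ne (by fun_prop)
      intro x hx; have := hx.1; positivity
    · apply ContDiffOn.rpow_const_of_ne (by fun_prop)
      intro x hx; have := hx.2; linarith
  obtain ⟨C, hC⟩ := exists_taylor_mean_remainder_bound (n := 1) (by norm_num) hc
  refine ⟨C, fun t ht => ?_⟩
  have h0 : h 0 = 0 := by simp [hh]; norm_num
  have hd : HasDerivAt h 0 0 := by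
    have h1 : HasDerivAt (fun t : ℝ => (1 + t) ^ r) (1 * r * (1 + 0 : ℝ) ^ (r - 1)) 0 :=
      HasDerivAt.rpow_const (f := fun t : ℝ => 1 + t) ((hasDerivAt_id (0 : ℝ)).const_add 1) (by simp)
    have h2 : HasDerivAt (fun t : ℝ => (1 - t) ^ r) ((-1) * r * (1 - 0 : ℝ) ^ (r - 1)) 0 :=
      HasDerivAt.rpow_const (f := fun t : ℝ => 1 - t) ((hasDerivAt_id (0 : ℝ)).const_sub 1) (by simp)
    have := (h1.const_sub 2).sub h2
    exact HasDerivAt.congr_deriv this (by norm_num)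
  have hdw : derivWithin h (Icc 0 (1 / 2)) 0 = 0 :=
    hd.hasDerivWithinAt.derivWithin (uniqueDiffOn_Icc (by norm_num) 0 (by norm_num))
  have := hC t ht
  rw [taylorWithinEval_succ, taylor_within_zero_eval] at this
  simp only [iteratedDerivWithin_one, zero_add, hdw, h0] at this
  simpa using this

lemma rpow_two_s_integrable {s : ℝ} (hs0 : 0 < s) {ε : ℝ} (hε : 0 < ε) :
    IntegrableOn (fun t : ℝ => (t ^ (1 + 2 * s))⁻¹) (Ioi ε) := by
  refine (integrableOn_Ioi_rpow_of_lt (a := -(1 + 2 * s)) (by linarith) hε).congr_fun ?_ measurableSet_Ioi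
  intro t ht
  exact Real.rpow_neg (hε.trans ht).le _

lemma ff_cont {s r : ℝ} (hr : 0 < r) : ContinuousOn (ff s r) (Ioi 0) := by
  unfold ff
  apply ContinuousOn.div
  · apply Continuous.continuousOn
    refine (continuous_const.sub (Continuous.rpow_const (by fun_prop) (fun _ => Or.inr hr.le))).sub ?_
    exact (oddPow_continuous hr).comp (by fun_prop)
  · exact continuousOn_id.rpow_const (fun x hx => Or.inl (ne_of_gt hx))
  · intro x hx; exact (Real.rpow_pos_of_pos hx _).ne'

lemma gg_cont {s r : ℝ} (hr : 0 < r) : ContinuousOn (gg s r) (Ioi 0) := by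
  unfold gg
  apply ContinuousOn.div
  · apply Continuous.continuousOn
    exact (Continuous.rpow_const (by fun_prop) (fun _ => Or.inr hr.le)).sub
      (Continuous.rpow_const (by fun_prop) (fun _ => Or.inr hr.le))
  · exact continuousOn_id.rpow_const (fun x hx => Or.inl (ne_of_gt hx))
  · intro x hx; exact (Real.rpow_pos_of_pos hx _).ne'

lemma ff_int {s r : ℝ} (hs1 : s < 1) (hr : 0 < r) (X : ℝ) :
    IntegrableOn (ff s r) (Ioc 0 X) := by
  have h1 : IntegrableOn (ff s r) (Ioc 0 (1 / 2)) := by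
    obtain ⟨C, hC⟩ := second_diff (r := r)
    have hi : IntegrableOn (fun t : ℝ => C * t ^ (1 - 2 * s)) (Ioc 0 (1 / 2)) := by
      apply Integrable.const_mul
      have := intervalIntegral.intervalIntegrable_rpow' (a := 0) (b := 1 / 2)
        (r := 1 - 2 * s) (by linarith)
      rwa [intervalIntegrable_iff_integrableOn_Ioc_of_le (by norm_num)] at this
    refine Integrable.mono' hi ?_ ?_
    · exact ((ff_cont hr).mono (fun x hx => hx.1)).aestronglyMeasurable measurableSet_Ioc
    · refine (ae_restrict_iff' measurableSet_Ioc).2 (Eventually.of_forall fun t ht => ?_)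
      have ht0 : 0 < t := ht.1
      have hodd : oddPow r (1 - t) = (1 - t) ^ r := by
        unfold oddPow; rw [if_neg]; have := ht.2; linarith
      have hp := Real.rpow_pos_of_pos ht0 (1 + 2 * s)
      rw [ff, hodd, Real.norm_eq_abs, abs_div, abs_of_pos hp, div_le_iff₀ hp, mul_assoc,
        ← Real.rpow_add ht0, show 1 - 2 * s + (1 + 2 * s) = (2 : ℕ) by norm_num,
        Real.rpow_natCast]
      exact hC t ⟨ht.1.le, ht.2⟩
  have h2 : IntegrableOn (ff s r) (Icc (1 / 2) X) :=
    ((ff_cont hr).mono (fun x hx => lt_of_lt_of_le (by norm_num) hx.1)).integrableOn_Icc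
  refine (h1.union h2).mono_set ?_
  intro x hx
  by_cases h : x ≤ 1 / 2
  · exact Or.inl ⟨hx.1, h⟩
  · exact Or.inr ⟨(not_le.1 h).le, hx.2⟩

lemma gg_int {s r : ℝ} (hr : 0 < r) (hr1 : r < 1 + 2 * s) :
    IntegrableOn (gg s r) (Ioi 1) := by
  have h2 : IntegrableOn (gg s r) (Ioi 2) := by
    set C : ℝ := 2 * r * (2 ^ (r - 1) + (1 / 2) ^ (r - 1)) with hCdef
    have hi : IntegrableOn (fun t : ℝ => C * t ^ (r - 1 - (1 + 2 * s))) (Ioi 2) :=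
      (integrableOn_Ioi_rpow_of_lt (by linarith) (by norm_num)).const_mul _
    refine Integrable.mono' hi ?_ ?_
    · exact ((gg_cont hr).mono (fun x hx => lt_trans (by norm_num) hx)).aestronglyMeasurable measurableSet_Ioi
    · refine (ae_restrict_iff' measurableSet_Ioi).2 (Eventually.of_forall fun t ht => ?_)
      have ht2 : 2 < t := ht
      have ht0 : 0 < t := by linarith
      have hp := Real.rpow_pos_of_pos ht0 (1 + 2 * s)
      obtain ⟨ξ, hξ, hξe⟩ := exists_hasDerivAt_eq_slope (fun z : ℝ => z ^ r)
        (fun z => r * z ^ (r - 1)) (a := t - 1) (b := t + 1) (by linarith)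
        (continuous_id.rpow_const (fun _ => Or.inr hr.le)).continuousOn
        (fun z hz => Real.hasDerivAt_rpow_const (Or.inl (by have := hz.1; linarith)))
      have e : (t + 1) ^ r - (t - 1) ^ r = 2 * r * ξ ^ (r - 1) := by
        have : (t + 1 - (t - 1)) = 2 := by ring
        rw [this] at hξe
        linarith
      have hξ0 : 0 < ξ := by linarith [hξ.1]
      have hb : ξ ^ (r - 1) ≤ (2 ^ (r - 1) + (1 / 2) ^ (r - 1)) * t ^ (r - 1) := by
        have ep : (0 : ℝ) < 2 ^ (r - 1) := by positivity
        have eq : (0 : ℝ) < (1 / 2) ^ (r - 1) := by positivity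
        have et : (0 : ℝ) < t ^ (r - 1) := by positivity
        rcases le_total 1 r with h | h
        · have : ξ ^ (r - 1) ≤ (2 * t) ^ (r - 1) :=
            Real.rpow_le_rpow hξ0.le (by linarith [hξ.2]) (by linarith)
          rw [Real.mul_rpow (by norm_num) ht0.le] at this
          nlinarith
        · have : ξ ^ (r - 1) ≤ (1 / 2 * t) ^ (r - 1) :=
            Real.rpow_le_rpow_of_nonpos (by linarith) (by linarith [hξ.1]) (by linarith)
          rw [Real.mul_rpow (by norm_num) ht0.le] at this
          nlinarith
      rw [gg, e, Real.norm_eq_abs, abs_of_nonneg (by positivity), div_le_iff₀ hp, mul_assoc,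
        mul_assoc, ← Real.rpow_add ht0, sub_add_cancel, hCdef]
      have := mul_le_mul_of_nonneg_left hb (show 0 ≤ 2 * r by linarith)
      linarith
  have h1 : IntegrableOn (gg s r) (Icc 1 2) :=
    ((gg_cont hr).mono (fun x hx => lt_of_lt_of_le (by norm_num) hx.1)).integrableOn_Icc
  refine (h1.union h2).mono_set ?_
  intro x hx
  by_cases h : x ≤ 2
  · exact Or.inl ⟨le_of_lt hx, h⟩
  · exact Or.inr (not_le.1 h)

lemma abs_inv_int {s : ℝ} (hs0 : 0 < s) {ε : ℝ} (hε : 0 < ε) :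
    IntegrableOn (fun t : ℝ => (|t| ^ (1 + 2 * s))⁻¹) {y : ℝ | ε < |y|} := by
  have h1 : IntegrableOn (fun t : ℝ => (|t| ^ (1 + 2 * s))⁻¹) (Ioi ε) :=
    (rpow_two_s_integrable hs0 hε).congr_fun
      (fun t ht => by simp only; rw [abs_of_pos (hε.trans ht)]) measurableSet_Ioi
  have h2 : IntegrableOn (fun t : ℝ => (|t| ^ (1 + 2 * s))⁻¹) (Iio (-ε)) := by
    have := h1.comp_neg
    simpa using this
  refine (h1.union h2).mono_set ?_
  intro y hy
  rcases lt_abs.1 (mem_ofPred_eq.mp hy) with h | h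
  · exact Or.inl h
  · exact Or.inr (by simp only [mem_Iio]; linarith)

lemma phi_int {s : ℝ} (hs0 : 0 < s) {ε : ℝ} (hε : 0 < ε) {v : ℝ → ℝ} (hv : Measurable v)
    {M : ℝ} (hM : ∀ x, |v x| ≤ M) (x : ℝ) :
    IntegrableOn (fun z : ℝ => (v x - v (x + z)) / |z| ^ (1 + 2 * s)) {y : ℝ | ε < |y|} := by
  refine Integrable.mono' ((abs_inv_int hs0 hε).const_mul (2 * M)) ?_ ?_
  · apply Measurable.aestronglyMeasurable
    have : Measurable fun z => v (x + z) := hv.comp (by fun_prop)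
    fun_prop
  · refine Eventually.of_forall fun z => ?_
    have hp : 0 ≤ |z| ^ (1 + 2 * s) := by positivity
    rw [Real.norm_eq_abs, abs_div, abs_of_nonneg hp, div_eq_mul_inv]
    apply mul_le_mul_of_nonneg_right _ (inv_nonneg.2 hp)
    have := abs_sub (v x) (v (x + z))
    linarith [hM x, hM (x + z)]

/-- The truncated integral over an annulus. -/
lemma annulus {φ : ℝ → ℝ} {ε : ℝ} (hε : 0 < ε) (hε2 : ε < 1 / 2)
    (hφ : IntegrableOn φ {y : ℝ | ε < |y|}) :
    ∫ z in {y : ℝ | ε < |y|}, φ z =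
      (∫ z in ε..(1 / 2), (φ z + φ (-z))) + ∫ z in {y : ℝ | 1 / 2 ≤ |y|}, φ z := by
  have hset : {y : ℝ | ε < |y|} = (Ioo ε (1 / 2) ∪ Ioo (-(1 / 2)) (-ε)) ∪ {y : ℝ | 1 / 2 ≤ |y|} := by
    ext y
    simp only [mem_ofPred_eq, mem_union, mem_Ioo]
    rcases abs_cases y with ⟨h, h'⟩ | ⟨h, h'⟩ <;> rw [h] <;> constructor <;> intro hh <;> grind
  have hm : MeasurableSet {y : ℝ | 1 / 2 ≤ |y|} := measurableSet_le measurable_const (by fun_prop)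
  rw [hset] at hφ ⊢
  have hA := hφ.mono_set (subset_union_left)
  have hB := hφ.mono_set (subset_union_right)
  have hA1 := hA.mono_set (subset_union_left)
  have hA2 := hA.mono_set (subset_union_right)
  rw [setIntegral_union _ hm hA hB, setIntegral_union _ measurableSet_Ioo hA1 hA2]
  · congr 1
    have i1 : IntervalIntegrable φ volume ε (1 / 2) := by
      rwa [intervalIntegrable_iff_integrableOn_Ioo_of_le hε2.le]
    have i2' : IntervalIntegrable φ volume (-(1 / 2)) (-ε) := by
      rwa [intervalIntegrable_iff_integrableOn_Ioo_of_le (by linarith)]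
    have i2 : IntervalIntegrable (fun z => φ (-z)) volume ε (1 / 2) := by
      have := (IntervalIntegrable.iff_comp_neg).1 i2'
      simpa using this.symm
    rw [intervalIntegral.integral_add i1 i2, intervalIntegral.integral_comp_neg,
      intervalIntegral.integral_of_le hε2.le, intervalIntegral.integral_of_le (by linarith),
      integral_Ioc_eq_integral_Ioo, integral_Ioc_eq_integral_Ioo]
  · rw [Set.disjoint_left]; intro a h1 h2; have := h1.1; have := h2.2; linarith
  · rw [Set.disjoint_left]; intro a h1 h2
    simp only [mem_ofPred_eq] at h2
    rcases h1 with h1 | h1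
    · rw [abs_of_pos (hε.trans h1.1)] at h2; linarith [h1.2]
    · rw [abs_of_neg (by linarith [h1.2])] at h2; linarith [h1.1]

lemma scaled {s r : ℝ} {v : ℝ → ℝ} (hv1 : ∀ x : ℝ, -1 ≤ x → x ≤ 1 → v x = oddPow r x)
    {x : ℝ} (hx : x ∈ Ioc (0 : ℝ) (1 / 2)) {ε : ℝ} (hε : 0 < ε) (hε2 : ε < 1 / 2) :
    ∫ z in ε..(1 / 2), ((v x - v (x + z)) / |z| ^ (1 + 2 * s)
        + (v x - v (x + -z)) / |(-z)| ^ (1 + 2 * s)) =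
      x ^ (r - 2 * s) * ∫ t in (ε / x)..(1 / (2 * x)), ff s r t := by
  have hx0 := hx.1
  have hx2 := hx.2
  have e1 : (1 / (2 * x)) = (1 / 2) / x := by field_simp
  rw [e1, ← intervalIntegral.inv_smul_integral_comp_div, smul_eq_mul, ← mul_assoc,
    ← intervalIntegral.integral_const_mul]
  apply intervalIntegral.integral_congr
  intro z hz
  rw [uIcc_of_le hε2.le] at hz
  have hz0 : 0 < z := hε.trans_le hz.1
  have hz2 := hz.2
  simp only
  rw [hv1 x (by linarith) (by linarith), hv1 (x + z) (by linarith) (by linarith),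
    hv1 (x + -z) (by linarith) (by linarith), abs_neg, abs_of_pos hz0, ff]
  have a1 : oddPow r x = x ^ r := by unfold oddPow; rw [if_neg (by linarith)]
  have a2 : oddPow r (x + z) = x ^ r * (1 + z / x) ^ r := by
    have : x + z = x * (1 + z / x) := by field_simp
    rw [this, oddPow_scale hx0]
    congr 1; unfold oddPow; rw [if_neg]; push Not; positivity
  have a3 : oddPow r (x + -z) = x ^ r * oddPow r (1 - z / x) := by
    have : x + -z = x * (1 - z / x) := by field_simp; ring
    rw [this, oddPow_scale hx0]
  have a4 : (z / x) ^ (1 + 2 * s) = z ^ (1 + 2 * s) / x ^ (1 + 2 * s) := Real.div_rpow hz0.le hx0.le _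
  have a5 : x ^ (r - 2 * s) * x⁻¹ * x ^ (1 + 2 * s) = x ^ r := by
    rw [← Real.rpow_neg_one, ← Real.rpow_add hx0, ← Real.rpow_add hx0]; congr 1; ring
  have hp : z ^ (1 + 2 * s) ≠ 0 := (Real.rpow_pos_of_pos hz0 _).ne'
  rw [a1, a2, a3, a4, div_div_eq_mul_div, ← add_div, mul_div_assoc', ← a5]
  congr 1
  ring

lemma ff_eq {s r t : ℝ} (hr : 0 < r) (ht : 1 ≤ t) :
    ff s r t = 2 * (t ^ (1 + 2 * s))⁻¹ - gg s r t := by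
  have : oddPow r (1 - t) = - (t - 1) ^ r := by
    unfold oddPow
    rcases ht.eq_or_lt with h | h
    · subst h; simp [Real.zero_rpow hr.ne']
    · rw [if_pos (by linarith), abs_of_neg (by linarith), neg_sub]
  rw [ff, gg, this, add_comm 1 t]; ring

lemma ff_total {s r : ℝ} (hs0 : 0 < s) (hs1 : s < 1) (hr : 0 < r) (hr1 : r < 1 + 2 * s)
    {X : ℝ} (hX : 1 ≤ X) :
    ∫ t in (0)..X, ff s r t = (∫ t in (0)..1, ff s r t) + (1 / s) * (1 - X ^ (-(2 * s)))
      - (∫ t in Ioi 1, gg s r t) + ∫ t in Ioi X, gg s r t := by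
  have hX0 : 0 < X := by linarith
  have i1 : IntervalIntegrable (ff s r) volume 0 1 := by
    rw [intervalIntegrable_iff_integrableOn_Ioc_of_le (by norm_num)]; exact ff_int hs1 hr 1
  have i2 : IntervalIntegrable (ff s r) volume 1 X := by
    rw [intervalIntegrable_iff_integrableOn_Ioc_of_le hX]
    exact (ff_int hs1 hr X).mono_set (Ioc_subset_Ioc_left (by norm_num))
  have i3 : IntervalIntegrable (gg s r) volume 1 X := by
    rw [intervalIntegrable_iff_integrableOn_Ioc_of_le hX]
    exact (gg_int hr hr1).mono_set Ioc_subset_Ioi_self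
  have hnot : (0 : ℝ) ∉ uIcc 1 X := by
    rw [uIcc_of_le hX]; intro h; have := h.1; linarith
  have i4 : IntervalIntegrable (fun t : ℝ => 2 * t ^ (-(1 + 2 * s))) volume 1 X :=
    (intervalIntegral.intervalIntegrable_rpow (Or.inr hnot)).const_mul 2
  rw [← intervalIntegral.integral_add_adjacent_intervals i1 i2]
  have e : ∫ t in (1)..X, ff s r t = ∫ t in (1)..X, (2 * t ^ (-(1 + 2 * s)) - gg s r t) := by
    apply intervalIntegral.integral_congr
    intro t ht
    rw [uIcc_of_le hX] at ht
    simp only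
    rw [ff_eq hr ht.1, Real.rpow_neg (by linarith [ht.1])]
  rw [e, intervalIntegral.integral_sub i4 i3, intervalIntegral.integral_const_mul,
    integral_rpow (Or.inr ⟨by linarith, hnot⟩)]
  have e2 : (∫ t in Ioi 1, gg s r t) = (∫ t in (1)..X, gg s r t) + ∫ t in Ioi X, gg s r t := by
    rw [intervalIntegral.integral_of_le hX, ← setIntegral_union, Ioc_union_Ioi_eq_Ioi hX]
    · exact Ioc_disjoint_Ioi le_rfl
    · exact measurableSet_Ioi
    · exact (gg_int hr hr1).mono_set Ioc_subset_Ioi_self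
    · exact (gg_int hr hr1).mono_set (Ioi_subset_Ioi hX)
  rw [e2, show -(1 + 2 * s) + 1 = -(2 * s) by ring, Real.one_rpow]
  field_simp
  ring

lemma transl_eq {v : ℝ → ℝ} {s x : ℝ} (ε : ℝ) :
    (∫ y in {y : ℝ | ε < |y - x|}, (v x - v y) / |x - y| ^ (1 + 2 * s)) =
      ∫ z in {y : ℝ | ε < |y|}, (v x - v (x + z)) / |z| ^ (1 + 2 * s) := by
  have := (measurePreserving_add_left volume x).setIntegral_preimage_emb
    (measurableEmbedding_addLeft x) (fun y => (v x - v y) / |x - y| ^ (1 + 2 * s))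
    {y : ℝ | ε < |y - x|}
  rw [← this]
  simp

lemma transl_int {v : ℝ → ℝ} {s x : ℝ} (ε : ℝ)
    (h : IntegrableOn (fun z : ℝ => (v x - v (x + z)) / |z| ^ (1 + 2 * s)) {y : ℝ | ε < |y|}) :
    IntegrableOn (fun y => (v x - v y) / |x - y| ^ (1 + 2 * s)) {y : ℝ | ε < |y - x|} := by
  have := (measurePreserving_add_left volume x).integrableOn_comp_preimage
    (measurableEmbedding_addLeft x) (f := fun y => (v x - v y) / |x - y| ^ (1 + 2 * s))
    (s := {y : ℝ | ε < |y - x|})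
  rw [← this]
  simpa [Function.comp_def] using h

theorem stmt5 (s r : ℝ) (hs0 : 0 < s) (hs1 : s < 1) (hr0 : 0 < r) (hr1 : r < 1 + 2 * s) :
    ∃ c₁ c₂ : ℝ, ∀ v : ℝ → ℝ, Measurable v → (∃ M : ℝ, ∀ x : ℝ, |v x| ≤ M) →
      (∀ x : ℝ, -1 ≤ x → x < 0 → v x = -(|x| ^ r)) →
      (∀ x : ℝ, 0 ≤ x → x ≤ 1 → v x = x ^ r) →
      ∀ x ∈ Set.Ioc (0 : ℝ) (1 / 2),
        HasFracLapAt s v x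
          (c₁ * x ^ (r - 2 * s) + c₂ * x ^ r
            + fracLapCoef s *
              (x ^ (r - 2 * s) *
                ∫ t in Set.Ioi (1 / (2 * x)), ((t + 1) ^ r - (t - 1) ^ r) / t ^ (1 + 2 * s))
            - fracLapCoef s *
              ∫ y in {y : ℝ | 1 / 2 ≤ |y|}, (v (x + y) - v x) / |y| ^ (1 + 2 * s)) := by
  refine ⟨fracLapCoef s * ((∫ t in (0)..1, ff s r t) + 1 / s - ∫ t in Ioi 1, gg s r t),
    -(fracLapCoef s * (2 ^ (2 * s) / s)), ?_⟩
  rintro v hv ⟨M, hM⟩ hneg hpos x hx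
  have hx0 := hx.1
  have hx2 := hx.2
  have hv1 : ∀ x : ℝ, -1 ≤ x → x ≤ 1 → v x = oddPow r x := by
    intro y h1 h2
    unfold oddPow
    split_ifs with h
    · exact hneg y h1 h
    · exact hpos y (not_lt.1 h) h2
  have hint : ∀ ε : ℝ, 0 < ε → IntegrableOn
      (fun z : ℝ => (v x - v (x + z)) / |z| ^ (1 + 2 * s)) {y : ℝ | ε < |y|} :=
    fun ε hε => phi_int hs0 hε hv hM x
  refine ⟨fun ε hε => transl_int ε (hint ε hε), ?_⟩
  have hX : 1 ≤ 1 / (2 * x) := by rw [le_div_iff₀ (by positivity)]; linarith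
  set H := ∫ y in {y : ℝ | 1 / 2 ≤ |y|}, (v (x + y) - v x) / |y| ^ (1 + 2 * s) with hH
  have hH' : ∫ y in {y : ℝ | 1 / 2 ≤ |y|}, (v x - v (x + y)) / |y| ^ (1 + 2 * s) = -H := by
    rw [hH, ← integral_neg]; congr 1; ext y; ring
  have key : ∀ᶠ ε in nhdsWithin (0 : ℝ) (Ioi 0),
      fracLapCoef s * (x ^ (r - 2 * s) * (∫ t in (ε / x)..(1 / (2 * x)), ff s r t) - H) =
      fracLapCoef s * ∫ y in {y : ℝ | ε < |y - x|}, (v x - v y) / |x - y| ^ (1 + 2 * s) := by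
    filter_upwards [Ioo_mem_nhdsGT (show (0 : ℝ) < 1 / 2 by norm_num)] with ε hε
    rw [transl_eq, annulus hε.1 hε.2 (hint ε hε.1), scaled hv1 hx hε.1 hε.2, hH', sub_eq_add_neg]
  refine Tendsto.congr' key ?_
  have hlim : Tendsto (fun ε => ∫ t in (ε / x)..(1 / (2 * x)), ff s r t)
      (nhdsWithin (0 : ℝ) (Ioi 0)) (nhds (∫ t in (0)..(1 / (2 * x)), ff s r t)) := by
    have hc := intervalIntegral.continuousOn_primitive_interval_left (f := ff s r)
      (μ := volume) (a := 0) (b := 1 / (2 * x)) (by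
        rw [uIcc_of_le (by linarith), integrableOn_Icc_iff_integrableOn_Ioc]
        exact ff_int hs1 hr0 _)
    have h0 := hc 0 left_mem_uIcc
    refine h0.tendsto.comp ?_
    rw [tendsto_nhdsWithin_iff]
    constructor
    · have : Tendsto (fun ε : ℝ => ε / x) (nhds 0) (nhds (0 / x)) := tendsto_id.div_const x
      rw [zero_div] at this
      exact this.mono_left nhdsWithin_le_nhds
    · filter_upwards [Ioo_mem_nhdsGT (show (0 : ℝ) < 1 / 2 by norm_num)] with ε hε
      rw [uIcc_of_le (by linarith)]
      refine ⟨(div_pos hε.1 hx0).le, ?_⟩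
      rw [show 1 / (2 * x) = (1 / 2) / x by field_simp]
      exact div_le_div_of_nonneg_right hε.2.le hx0.le
  have := ((hlim.const_mul (x ^ (r - 2 * s))).sub_const H).const_mul (fracLapCoef s)
  convert this using 2
  rw [ff_total hs0 hs1 hr0 hr1 hX]
  have e1 : (1 / (2 * x)) ^ (-(2 * s)) = 2 ^ (2 * s) * x ^ (2 * s) := by
    rw [one_div, Real.inv_rpow (by positivity), Real.rpow_neg (by positivity), inv_inv,
      Real.mul_rpow (by norm_num) hx0.le]
  have e2 : x ^ r = x ^ (r - 2 * s) * x ^ (2 * s) := by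
    rw [← Real.rpow_add hx0]; congr 1; ring
  rw [e1, e2]
  simp only [gg]
  ring
end

section
/- Let 0<s<1 and β>0 with 2s = 1-β, and define u:ℝ→ℝ by u(x) = |x| for |x| ≤ 1 and u(x) = 1 for |x| > 1. Then there exists a measurable function f:ℝ→ℝ whose restriction to [0,1/2] belongs to C^β([0,1/2]) such that (-Δ)^s u(x) = f(u(x)) for all x ∈ [-1/2, 1/2]. -/
open MeasureTheory Filter Set

noncomputable def kerM (p z : ℝ) : ℝ := min |z| 1 / |z| ^ p

lemma kerM_nonneg (p z : ℝ) : 0 ≤ kerM p z := by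
  unfold kerM; positivity

lemma kerM_meas (p : ℝ) : Measurable (kerM p) := by
  unfold kerM; fun_prop

lemma kerM_neg (p z : ℝ) : kerM p (-z) = kerM p z := by simp [kerM]

lemma kerM_integrable {p : ℝ} (h1 : 1 < p) (h2 : p < 2) : Integrable (kerM p) := by
  have hA : IntegrableOn (kerM p) (Ioc 0 1) := by
    have h0 : IntegrableOn (fun z : ℝ => z ^ (1 - p)) (Ioc 0 1) := by
      rw [← intervalIntegrable_iff_integrableOn_Ioc_of_le zero_le_one]
      exact intervalIntegral.intervalIntegrable_rpow' (by linarith)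
    refine h0.congr_fun ?_ measurableSet_Ioc
    intro z hz
    have hz0 : 0 < z := hz.1
    simp only [kerM, abs_of_pos hz0, min_eq_left hz.2]
    rw [Real.rpow_sub hz0, Real.rpow_one]
  have hB : IntegrableOn (kerM p) (Ioi 1) := by
    have h0 : IntegrableOn (fun z : ℝ => z ^ (-p)) (Ioi 1) :=
      integrableOn_Ioi_rpow_of_lt (by linarith) one_pos
    refine h0.congr_fun ?_ measurableSet_Ioi
    intro z hz
    have hz1 : 1 < z := hz
    have hz0 : 0 < z := by linarith
    simp only [kerM, abs_of_pos hz0, min_eq_right hz1.le]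
    rw [Real.rpow_neg hz0.le, one_div]
  have hC : IntegrableOn (kerM p) (Ioi 0) := by
    rw [← Ioc_union_Ioi_eq_Ioi (zero_le_one' ℝ)]
    exact hA.union hB
  have hD : IntegrableOn (kerM p) (Iic 0) := by
    have h3 : IntegrableOn (kerM p) (Ici 0) := by
      rw [integrableOn_Ici_iff_integrableOn_Ioi]
      exact hC
    have h3' : IntegrableOn (kerM p) (Ici (-0)) := by rwa [neg_zero]
    have h4 : IntegrableOn (fun x => kerM p (-x)) (Iic 0) := h3'.comp_neg_Iic
    exact h4.congr_fun (fun z _ => kerM_neg p z) measurableSet_Iic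
  rw [← integrableOn_univ, ← Iic_union_Ioi (a := (0:ℝ))]
  exact hD.union hC

lemma kerM_scale {p h : ℝ} (hh : 0 < h) (z : ℝ) :
    min |z| h / |z| ^ p = h ^ (1 - p) * kerM p (h⁻¹ * z) := by
  have e : |h⁻¹ * z| = |z| / h := by
    rw [abs_mul, abs_of_pos (inv_pos.2 hh)]; field_simp
  have e2 : min |z| h = h * min (|z| / h) 1 := by
    rw [mul_min_of_nonneg _ _ hh.le]; congr 1 <;> field_simp
  rw [kerM, e, e2, Real.div_rpow (abs_nonneg z) hh.le, Real.rpow_sub hh, Real.rpow_one]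
  have : 0 < h ^ p := Real.rpow_pos_of_pos hh p
  field_simp

lemma kerM_scale_int {p h : ℝ} (hh : 0 < h) :
    ∫ z, min |z| h / |z| ^ p = h ^ (2 - p) * ∫ z, kerM p z := by
  simp_rw [kerM_scale hh]
  rw [integral_const_mul, Measure.integral_comp_mul_left]
  rw [inv_inv, abs_of_pos hh, smul_eq_mul, ← mul_assoc]
  congr 1
  rw [show 2 - p = (1 - p) + 1 by ring, Real.rpow_add hh, Real.rpow_one]

lemma kerM_scale_integrable {p h : ℝ} (h1 : 1 < p) (h2 : p < 2) (hh : 0 < h) :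
    Integrable (fun z : ℝ => min |z| h / |z| ^ p) := by
  simp_rw [kerM_scale hh]
  exact ((integrable_comp_mul_left_iff _ (inv_ne_zero hh.ne')).2
    (kerM_integrable h1 h2)).const_mul _

/-- The integrated difference quotient. -/
noncomputable def gI (p : ℝ) (u : ℝ → ℝ) (x : ℝ) : ℝ := ∫ z, (u x - u (x - z)) / |z| ^ p

lemma diff_integrable {p : ℝ} (h1 : 1 < p) (h2 : p < 2) {u : ℝ → ℝ} (hm : Measurable u)
    (hL : ∀ x y, |u x - u y| ≤ |x - y|) (hb : ∀ x y, |u x - u y| ≤ 1) (x : ℝ) :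
    Integrable (fun z : ℝ => (u x - u (x - z)) / |z| ^ p) := by
  refine (kerM_integrable h1 h2).mono'
    (Measurable.aestronglyMeasurable (by fun_prop)) (Eventually.of_forall fun z => ?_)
  rw [Real.norm_eq_abs, abs_div, abs_of_nonneg (by positivity : 0 ≤ |z| ^ p), kerM]
  gcongr
  refine le_min ?_ (hb _ _)
  simpa using hL x (x - z)

lemma gI_holder {p : ℝ} (h1 : 1 < p) (h2 : p < 2) {u : ℝ → ℝ} (hm : Measurable u)
    (hL : ∀ x y, |u x - u y| ≤ |x - y|) (hb : ∀ x y, |u x - u y| ≤ 1) (x y : ℝ) :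
    |gI p u x - gI p u y| ≤ (2 * ∫ z, kerM p z) * |x - y| ^ (2 - p) := by
  rcases eq_or_ne x y with rfl | hxy
  · have : 2 - p ≠ 0 := by linarith
    simp [Real.zero_rpow this]
  have hh : 0 < |x - y| := abs_pos.2 (sub_ne_zero.2 hxy)
  unfold gI
  rw [← integral_sub (diff_integrable h1 h2 hm hL hb x) (diff_integrable h1 h2 hm hL hb y)]
  have e : (2 * ∫ z, kerM p z) * |x - y| ^ (2 - p) =
      ∫ z, 2 * (min |z| |x - y| / |z| ^ p) := by
    rw [integral_const_mul, kerM_scale_int hh]; ring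
  rw [e, ← Real.norm_eq_abs]
  refine norm_integral_le_of_norm_le ((kerM_scale_integrable h1 h2 hh).const_mul 2)
    (Eventually.of_forall fun z => ?_)
  rw [← sub_div, Real.norm_eq_abs, abs_div, abs_of_nonneg (by positivity : 0 ≤ |z| ^ p),
    ← mul_div_assoc]
  gcongr
  rw [mul_min_of_nonneg _ _ (by norm_num)]
  have a1 := abs_le.1 (hL x (x - z))
  have a2 := abs_le.1 (hL y (y - z))
  have a3 := abs_le.1 (hL x y)
  have a4 := abs_le.1 (hL (x - z) (y - z))
  rw [sub_sub_cancel] at a1 a2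
  rw [sub_sub_sub_cancel_right] at a4
  refine le_min (abs_le.2 ⟨?_, ?_⟩) (abs_le.2 ⟨?_, ?_⟩) <;> linarith [a1.1, a1.2, a2.1, a2.2, a3.1, a3.2, a4.1, a4.2]

lemma gI_even (p : ℝ) {u : ℝ → ℝ} (he : ∀ x, u (-x) = u x) (x : ℝ) :
    gI p u (-x) = gI p u x := by
  unfold gI
  rw [← integral_neg_eq_self]
  congr 1; ext z
  rw [abs_neg, he, ← he (-x - -z)]
  congr 3; ring_nf

lemma gI_abs (p : ℝ) {u : ℝ → ℝ} (he : ∀ x, u (-x) = u x) (x : ℝ) :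
    gI p u |x| = gI p u x := by
  rcases abs_choice x with e | e <;> rw [e]
  exact gI_even p he x

lemma gI_frac {s : ℝ} (h1 : 1 < 1 + 2 * s) (h2 : 1 + 2 * s < 2) {u : ℝ → ℝ} (hm : Measurable u)
    (hL : ∀ x y, |u x - u y| ≤ |x - y|) (hb : ∀ x y, |u x - u y| ≤ 1) (x : ℝ) :
    HasFracLapAt s u x (fracLapCoef s * gI (1 + 2 * s) u x) := by
  have hI : Integrable (fun y : ℝ => (u x - u y) / |x - y| ^ (1 + 2 * s)) := by
    have := (diff_integrable h1 h2 hm hL hb x).comp_sub_left x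
    simpa using this
  have hE : gI (1 + 2 * s) u x = ∫ y, (u x - u y) / |x - y| ^ (1 + 2 * s) := by
    unfold gI
    rw [← integral_sub_left_eq_self _ volume x]
    simp
  refine ⟨fun ε _ => hI.integrableOn, ?_⟩
  rw [hE]
  refine Tendsto.const_mul _ ?_
  have hc : AECover volume (nhdsWithin (0:ℝ) (Ioi 0)) (fun ε : ℝ => {y : ℝ | ε < |y - x|}) := by
    refine ⟨?_, fun ε => measurableSet_lt (by fun_prop) (by fun_prop)⟩
    have : ∀ᵐ y : ℝ, y ≠ x := by simp [ae_iff]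
    filter_upwards [this] with y hy
    exact nhdsWithin_le_nhds (eventually_lt_nhds (abs_pos.2 (sub_ne_zero.2 hy)))
  exact hc.integral_tendsto_of_countably_generated hI

theorem stmt9 (s β : ℝ) (hs0 : 0 < s) (hs1 : s < 1) (hβ0 : 0 < β) (h : 2 * s = 1 - β)
    (u : ℝ → ℝ)
    (hu1 : ∀ x : ℝ, |x| ≤ 1 → u x = |x|)
    (hu2 : ∀ x : ℝ, 1 < |x| → u x = 1) :
    ∃ f : ℝ → ℝ, Measurable f ∧
      MemCalpha β (Set.Icc 0 (1 / 2)) f ∧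
      ∀ x ∈ Set.Icc (-(1 / 2) : ℝ) (1 / 2), HasFracLapAt s u x (f (u x)) := by
  have hu : u = fun x => min |x| 1 := by
    ext x
    rcases le_or_gt |x| 1 with hx | hx
    · rw [hu1 x hx, min_eq_left hx]
    · rw [hu2 x hx, min_eq_right hx.le]
  have hm : Measurable u := by rw [hu]; fun_prop
  have hL : ∀ x y, |u x - u y| ≤ |x - y| := fun x y => by
    rw [hu]
    refine (abs_inf_sub_inf_le_abs |x| |y| 1).trans (abs_abs_sub_abs_le_abs_sub x y)
  have hb : ∀ x y, |u x - u y| ≤ 1 := fun x y => by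
    have k : ∀ x, 0 ≤ u x ∧ u x ≤ 1 := fun x => by
      rw [hu]; exact ⟨by positivity, min_le_right _ _⟩
    rw [abs_le]; constructor <;> linarith [(k x).1, (k x).2, (k y).1, (k y).2]
  have he : ∀ x, u (-x) = u x := fun x => by simp [hu]
  have h1 : 1 < 1 + 2 * s := by linarith
  have h2 : 1 + 2 * s < 2 := by linarith
  have hfl : ⌊β⌋₊ = 0 := Nat.floor_eq_zero.2 (by linarith)
  have hK : 0 ≤ ∫ z, kerM (1 + 2 * s) z := integral_nonneg (kerM_nonneg _)
  set f : ℝ → ℝ := fun x => fracLapCoef s * gI (1 + 2 * s) u x with hf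
  obtain ⟨C, hC⟩ : ∃ C : NNReal, C = |fracLapCoef s| * (2 * ∫ z, kerM (1 + 2 * s) z) :=
    ⟨⟨_, by positivity⟩, rfl⟩
  have hH : HolderWith C β.toNNReal f := by
    intro x y
    have hd : dist (f x) (f y) ≤ C * dist x y ^ β := by
      rw [Real.dist_eq, Real.dist_eq, hC, hf]
      simp only
      rw [← mul_sub, abs_mul, mul_assoc]
      gcongr
      have := gI_holder h1 h2 hm hL hb x y
      rwa [show 2 - (1 + 2 * s) = β by linarith] at this
    rw [edist_dist, edist_dist, Real.coe_toNNReal _ hβ0.le,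
      ENNReal.ofReal_rpow_of_nonneg dist_nonneg hβ0.le, ← ENNReal.ofReal_coe_nnreal,
      ← ENNReal.ofReal_mul C.coe_nonneg]
    exact ENNReal.ofReal_le_ofReal hd
  have hcont : Continuous f := hH.continuous (Real.toNNReal_pos.2 hβ0)
  refine ⟨f, hcont.measurable, ⟨?_, ?_, ?_⟩, ?_⟩
  · rw [hfl]
    simpa using hcont.continuousOn
  · intro k hk
    obtain rfl : k = 0 := by omega
    obtain ⟨D, hD⟩ := (isCompact_Icc (a := (0:ℝ)) (b := 1 / 2)).exists_bound_of_continuousOn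
      hcont.continuousOn
    exact ⟨D, fun x hx => by simpa using hD x hx⟩
  · refine ⟨C, ?_⟩
    rw [hfl, iteratedDerivWithin_zero, Nat.cast_zero, sub_zero]
    exact hH.holderOnWith _
  · intro x hx
    have hx1 : |x| ≤ 1 := by rw [abs_le]; constructor <;> linarith [hx.1, hx.2]
    rw [hu1 x hx1, hf]
    simp only
    rw [gI_abs _ he]
    exact gI_frac h1 h2 hm hL hb x
end

section
/- Let 0<β<1 and 0<s with 2s ≤ 1-β. Then there exist a periodic function u ∈ C^{2s/(1-β)}(ℝ) and a function f ∈ C^β(ℝ) such that (-Δ)^s u(x) = f(u(x)) for all x ∈ ℝ, and for every ε>0, ρ>0, u does not belong to C^{2s/(1-β)+ε}([-ρ,ρ]). -/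
open MeasureTheory Filter Set

namespace FL
open Real

noncomputable def mm (s a y : ℝ) : ℝ := y ^ (a - 1) / (1 / s - Real.log y)

lemma den_ge {s y : ℝ} (hy0 : 0 < y) (hy1 : y ≤ 1) : 1 / s ≤ 1 / s - Real.log y := by
  have := Real.log_nonpos hy0.le hy1
  linarith

lemma den_pos {s y : ℝ} (hs : 0 < s) (hy0 : 0 < y) (hy1 : y ≤ 1) : 0 < 1 / s - Real.log y :=
  lt_of_lt_of_le (by positivity) (den_ge hy0 hy1)

lemma mm_pos {s a y : ℝ} (hs : 0 < s) (hy0 : 0 < y) (hy1 : y ≤ 1) : 0 < mm s a y :=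
  div_pos (Real.rpow_pos_of_pos hy0 _) (den_pos hs hy0 hy1)

lemma mm_le {s a y : ℝ} (hs : 0 < s) (hs1 : s ≤ 1) (hy0 : 0 < y) (hy1 : y ≤ 1) :
    mm s a y ≤ y ^ (a - 1) := by
  unfold mm
  apply div_le_self (Real.rpow_nonneg hy0.le _)
  have : 1 ≤ 1 / s := by rw [le_div_iff₀ hs]; linarith
  exact this.trans (den_ge hy0 hy1)

lemma den_mono {s y r : ℝ} (hs : 0 < s) (hy0 : 0 < y) (hy1 : y ≤ 1) (hr0 : 0 < r)
    (hr1 : r ≤ 1) : r ^ s * (1 / s - Real.log (r * y)) ≤ 1 / s - Real.log y := by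
  rw [Real.log_mul hr0.ne' hy0.ne']
  have hB := den_ge (s := s) hy0 hy1
  set B := 1 / s - Real.log y with hBdef
  have hl := Real.log_nonpos hr0.le hr1
  set l := Real.log r with hldef
  have e : r ^ s = Real.exp (l * s) := by rw [Real.rpow_def_of_pos hr0]
  have h1 : 1 - s * l ≤ Real.exp (-(l * s)) := by
    have := Real.add_one_le_exp (-(l * s)); linarith
  have h2 : 1 / s - (l + Real.log y) = B - l := by rw [hBdef]; ring
  rw [h2, e]
  have hsB : 1 ≤ s * B := by
    have := mul_le_mul_of_nonneg_left hB hs.le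
    rwa [mul_one_div_cancel hs.ne'] at this
  have h3 : B - l ≤ B * Real.exp (-(l * s)) := by
    have hBp : 0 ≤ B := le_trans (by positivity) hB
    have := mul_le_mul_of_nonneg_left h1 hBp
    nlinarith
  calc Real.exp (l * s) * (B - l) ≤ Real.exp (l * s) * (B * Real.exp (-(l * s))) := by gcongr
    _ = B := by rw [Real.exp_neg]; field_simp

lemma mm_up {s a y z : ℝ} (hs : 0 < s) (ha1 : a ≤ 1) (hy0 : 0 < y) (hyz : y ≤ z) (hz1 : z ≤ 1) :
    mm s a z ≤ mm s a y * (z / y) ^ s := by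
  have hz0 : 0 < z := hy0.trans_le hyz
  have h1 := den_mono (s := s) (y := z) (r := y / z) hs hz0 hz1 (by positivity)
    ((div_le_one hz0).2 hyz)
  rw [div_mul_cancel₀ _ hz0.ne'] at h1
  have hdz := den_pos hs hz0 hz1
  have hdy := den_pos hs hy0 (hyz.trans hz1)
  have h2 : z ^ (a - 1) ≤ y ^ (a - 1) := Real.rpow_le_rpow_of_nonpos hy0 hyz (by linarith)
  have h3 : (z / y) ^ s = ((y / z) ^ s)⁻¹ := by
    rw [← Real.inv_rpow (by positivity), inv_div]
  have hp : 0 < (y / z) ^ s := by positivity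
  unfold mm
  rw [h3, div_mul_eq_mul_div, div_le_div_iff₀ hdz hdy]
  have : y ^ (a-1) * ((y / z) ^ s)⁻¹ * (1 / s - Real.log z) ≥
     y ^ (a-1) * ((y / z) ^ s)⁻¹ * ((y / z) ^ s * (1 / s - Real.log y)) := by gcongr
  have e : y ^ (a-1) * ((y / z) ^ s)⁻¹ * ((y / z) ^ s * (1 / s - Real.log y)) =
     y ^ (a-1) * (1 / s - Real.log y) := by field_simp
  rw [e] at this
  refine le_trans ?_ this
  gcongr

lemma mm_down {s a y z : ℝ} (hs : 0 < s) (hy0 : 0 < y) (hyz : y ≤ z) (hz1 : z ≤ 1) :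
    mm s a y ≤ mm s a z * (z / y) ^ (1 - a) := by
  have hz0 : 0 < z := hy0.trans_le hyz
  have hdz := den_pos hs hz0 hz1
  unfold mm
  have e : z ^ (a - 1) * (z / y) ^ (1 - a) = y ^ (a - 1) := by
    rw [Real.div_rpow hz0.le hy0.le, show a - 1 = -(1 - a) by ring, Real.rpow_neg hz0.le,
      Real.rpow_neg hy0.le]
    have := Real.rpow_pos_of_pos hz0 (1 - a)
    field_simp
  rw [div_mul_eq_mul_div, e]
  have : Real.log y ≤ Real.log z := Real.log_le_log hy0 hyz
  gcongr

lemma mm_low {s a y : ℝ} (hs : 0 < s) (ha1 : a ≤ 1) (hy0 : 0 < y) (hy1 : y ≤ 1) :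
    s * y ^ s ≤ mm s a y := by
  have := mm_up (s := s) hs ha1 hy0 hy1 le_rfl
  have e : mm s a 1 = s := by simp [mm]
  rw [e, Real.div_rpow zero_le_one hy0.le, Real.one_rpow, ← div_eq_mul_one_div,
    le_div_iff₀ (by positivity)] at this
  exact this

lemma mm_low' {s a y η : ℝ} (hs : 0 < s) (hη : 0 < η) (hy0 : 0 < y) (hy1 : y ≤ 1) :
    (1 / s + 1 / η)⁻¹ * (y ^ (a - 1) * y ^ η) ≤ mm s a y := by
  unfold mm
  have hd := den_pos hs hy0 hy1
  have h1 : 1 / s - Real.log y ≤ (1 / s + 1 / η) * (y ^ η)⁻¹ := by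
    have h2 := Real.log_le_rpow_div (x := y⁻¹) (by positivity) hη
    rw [Real.log_inv, Real.inv_rpow hy0.le] at h2
    have h3 : 1 ≤ (y ^ η)⁻¹ := (one_le_inv₀ (by positivity)).2 (Real.rpow_le_one hy0.le hy1 hη.le)
    have h4 : 1 / s * 1 ≤ 1 / s * (y ^ η)⁻¹ := by gcongr
    have h5 : (y ^ η)⁻¹ / η = 1 / η * (y ^ η)⁻¹ := by ring
    rw [add_mul]; linarith
  rw [le_div_iff₀ hd]
  calc _ ≤ (1 / s + 1 / η)⁻¹ * (y ^ (a - 1) * y ^ η) * ((1 / s + 1 / η) * (y ^ η)⁻¹) := by gcongr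
    _ = y ^ (a - 1) := by field_simp

/-- the derivative of the solution -/
noncomputable def vv (s a x : ℝ) : ℝ :=
  Real.sin x * |Real.sin x| ^ (a - 2) / (1 / s - Real.log (Real.sin x))

lemma vv_zero {s a x : ℝ} (hx : Real.sin x = 0) : vv s a x = 0 := by simp [vv, hx]

lemma vv_abs {s a x : ℝ} (hs : 0 < s) (hx : Real.sin x ≠ 0) : |vv s a x| = mm s a |Real.sin x| := by
  have hp : 0 < |Real.sin x| := abs_pos.2 hx
  have hd := den_pos hs hp (Real.abs_sin_le_one x)
  rw [Real.log_abs] at hd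
  unfold vv mm
  rw [abs_div, abs_mul, abs_of_pos hd, Real.log_abs, abs_of_nonneg (Real.rpow_nonneg hp.le _)]
  congr 1
  rw [show a - 1 = 1 + (a - 2) by ring, Real.rpow_add hp, Real.rpow_one]

lemma vv_pos {s a x : ℝ} (hs : 0 < s) (hx : 0 < Real.sin x) : 0 < vv s a x := by
  have hd := den_pos hs hx (Real.sin_le_one x)
  unfold vv
  have := abs_pos.2 hx.ne'
  positivity

lemma vv_eq {s a x : ℝ} (hs : 0 < s) (hx : 0 < Real.sin x) : vv s a x = mm s a (Real.sin x) := by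
  rw [← abs_of_pos (vv_pos hs hx), vv_abs hs hx.ne', abs_of_pos hx]

lemma vv_neg (s a x : ℝ) : vv s a (-x) = - vv s a x := by
  simp [vv, neg_mul, neg_div]

lemma vv_pi_sub (s a x : ℝ) : vv s a (π - x) = vv s a x := by
  simp [vv]

lemma vv_add_pi (s a x : ℝ) : vv s a (x + π) = - vv s a x := by
  simp [vv, neg_mul, neg_div]

lemma vv_periodic (s a : ℝ) : Function.Periodic (vv s a) (2 * π) := by
  intro x; simp [vv]

lemma vv_meas (s a : ℝ) : Measurable (vv s a) := by
  unfold vv; fun_prop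

lemma vv_le {s a x : ℝ} (hs : 0 < s) (hs1 : s ≤ 1) : |vv s a x| ≤ |Real.sin x| ^ (a - 1) := by
  by_cases hx : Real.sin x = 0
  · rw [vv_zero hx]; simp; positivity
  · rw [vv_abs hs hx]; exact mm_le hs hs1 (abs_pos.2 hx) (Real.abs_sin_le_one x)

/-- comparison -/
lemma vv_cmp {s a x y : ℝ} (hs : 0 < s) (ha1 : a ≤ 1) (hx : Real.sin x ≠ 0) (hy : Real.sin y ≠ 0) :
    |vv s a y| ≤ |vv s a x| * ((|Real.sin y| / |Real.sin x|) ^ s +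
      (|Real.sin x| / |Real.sin y|) ^ (1 - a)) := by
  have hx0 := abs_pos.2 hx
  have hy0 := abs_pos.2 hy
  rw [vv_abs hs hx, vv_abs hs hy, mul_add]
  have hm := mm_pos (a := a) hs hx0 (Real.abs_sin_le_one x)
  rcases le_total |Real.sin x| |Real.sin y| with h | h
  · have := mm_up (a := a) hs ha1 hx0 h (Real.abs_sin_le_one y)
    have : 0 ≤ mm s a |Real.sin x| * (|Real.sin x| / |Real.sin y|) ^ (1 - a) := by positivity
    linarith
  · have := mm_down (a := a) hs hy0 h (Real.abs_sin_le_one x)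
    have : 0 ≤ mm s a |Real.sin x| * (|Real.sin y| / |Real.sin x|) ^ s := by positivity
    linarith

lemma sin_low {p : ℝ} (hp : |p| ≤ 3 * π / 4) : |p| / 5 ≤ |Real.sin p| := by
  wlog h : 0 ≤ p generalizing p
  · have := this (p := -p) (by rwa [abs_neg]) (by linarith)
    simpa using this
  rw [abs_of_nonneg h] at *
  have hpi := Real.pi_le_four
  have hpi3 := Real.pi_gt_three
  rcases le_total p (π / 2) with h2 | h2
  · have h3 := Real.mul_le_sin h h2
    have : p / 5 ≤ 2 / π * p := by
      rw [div_mul_eq_mul_div, div_le_div_iff₀ (by norm_num) (by positivity)]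
      nlinarith
    exact (this.trans h3).trans (le_abs_self _)
  · have h3 := Real.mul_le_sin (x := π - p) (by linarith) (by linarith)
    rw [Real.sin_pi_sub] at h3
    have : (1:ℝ) / 2 ≤ 2 / π * (π - p) := by
      rw [div_mul_eq_mul_div, div_le_div_iff₀ (by norm_num) (by positivity)]
      nlinarith
    have h4 := Real.pi_lt_d2
    have : p / 5 ≤ 1 / 2 := by linarith
    refine le_trans ?_ (le_abs_self _)
    linarith

lemma sin_low' {p : ℝ} (h0 : 0 ≤ p) (h1 : p ≤ π / 2) : p / 5 ≤ Real.sin p := by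
  have := sin_low (p := p) (by rw [abs_of_nonneg h0]; linarith [Real.pi_pos])
  rwa [abs_of_nonneg h0, abs_of_nonneg (Real.sin_nonneg_of_nonneg_of_le_pi h0 (by linarith [Real.pi_pos]))] at this

lemma rpow_le_self_of {c e : ℝ} (hc : 1 ≤ c) (he : e ≤ 1) : c ^ e ≤ c := by
  simpa using Real.rpow_le_rpow_of_exponent_le hc he

/-- comparison in terms of the arguments -/
lemma vv_cmp' {s a t p : ℝ} (hs : 0 < s) (hs1 : s ≤ 1) (ha : 0 < a) (ha1 : a ≤ 1) (ht0 : 0 < t)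
    (ht1 : t ≤ π / 2) (hp : |p| ≤ 3 * π / 4) (hp0 : p ≠ 0) :
    |vv s a p| ≤ 5 * vv s a t * ((|p| / t) ^ s + |p| ^ (a - 1) * t ^ (1 - a)) := by
  have hp0' := abs_pos.2 hp0
  have h1 := sin_low hp
  have h2 := sin_low' ht0.le ht1
  have hst : 0 < Real.sin t := by linarith
  have hsp : 0 < |Real.sin p| := by linarith
  have h3 : Real.sin t ≤ t := Real.sin_le ht0.le
  have h4 : |Real.sin p| ≤ |p| := Real.abs_sin_le_abs
  have hv := vv_pos (a := a) hs hst
  have h := vv_cmp (s := s) hs ha1 hst.ne' (abs_pos.1 hsp)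
  rw [abs_of_pos hst, abs_of_pos hv] at h
  have A : (|Real.sin p| / Real.sin t) ^ s ≤ 5 * (|p| / t) ^ s := by
    calc (|Real.sin p| / Real.sin t) ^ s ≤ (|p| / (t / 5)) ^ s := by gcongr
      _ = (5 * (|p| / t)) ^ s := by congr 1; field_simp
      _ = 5 ^ s * (|p| / t) ^ s := Real.mul_rpow (by norm_num) (by positivity)
      _ ≤ 5 * (|p| / t) ^ s := by gcongr; exact rpow_le_self_of (by norm_num) hs1
  have B : (Real.sin t / |Real.sin p|) ^ (1 - a) ≤ 5 * (|p| ^ (a - 1) * t ^ (1 - a)) := by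
    have h1a : 0 ≤ 1 - a := by linarith
    calc (Real.sin t / |Real.sin p|) ^ (1 - a) ≤ (t / (|p| / 5)) ^ (1 - a) := by gcongr
      _ = (5 * (t / |p|)) ^ (1 - a) := by congr 1; field_simp
      _ = 5 ^ (1 - a) * (t / |p|) ^ (1 - a) := Real.mul_rpow (by norm_num) (by positivity)
      _ ≤ 5 * (t / |p|) ^ (1 - a) := by gcongr; exact rpow_le_self_of (by norm_num) (by linarith)
      _ = 5 * (|p| ^ (a - 1) * t ^ (1 - a)) := by
        rw [Real.div_rpow ht0.le hp0'.le, show a - 1 = -(1 - a) by ring, Real.rpow_neg hp0'.le]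
        field_simp
  calc _ ≤ _ := h
    _ ≤ vv s a t * (5 * (|p| / t) ^ s + 5 * (|p| ^ (a - 1) * t ^ (1 - a))) := by gcongr
    _ = _ := by ring

/-- pointwise bound near zero -/
lemma vv_le_rpow {s a t : ℝ} (hs : 0 < s) (hs1 : s ≤ 1) (ha : 0 < a) (ha1 : a ≤ 1) (ht0 : 0 < t)
    (ht1 : t ≤ π / 2) : |vv s a t| ≤ 5 * t ^ (a - 1) := by
  have h2 := sin_low' ht0.le ht1
  have hst : 0 < Real.sin t := by linarith
  refine (vv_le hs hs1).trans ?_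
  rw [abs_of_pos hst]
  calc Real.sin t ^ (a - 1) ≤ (t / 5) ^ (a - 1) :=
        Real.rpow_le_rpow_of_nonpos (by positivity) h2 (by linarith)
    _ = 5 ^ (1 - a) * t ^ (a - 1) := by
        rw [Real.div_rpow ht0.le (by norm_num), show 1 - a = -(a - 1) by ring,
          Real.rpow_neg (by norm_num)]
        field_simp
    _ ≤ 5 * t ^ (a - 1) := by gcongr; exact rpow_le_self_of (by norm_num) (by linarith)

lemma vv_low_const {s a t : ℝ} (hs : 0 < s) (hs1 : s ≤ 1) (ha1 : a ≤ 1) (ht0 : 0 < t)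
    (ht1 : t ≤ π / 2) : s / 10 ≤ t ^ (-(2 * s)) * vv s a t := by
  have h2 := sin_low' ht0.le ht1
  have hst : 0 < Real.sin t := by linarith
  rw [vv_eq hs hst]
  have h3 := mm_low (a := a) hs ha1 hst (Real.sin_le_one t)
  have h5 : (5:ℝ) ^ s ≤ 5 := rpow_le_self_of (by norm_num) hs1
  have h4 : t ^ s / 5 ≤ Real.sin t ^ s := by
    calc t ^ s / 5 ≤ t ^ s / 5 ^ s := by gcongr
      _ = (t / 5) ^ s := (Real.div_rpow ht0.le (by norm_num) _).symm
      _ ≤ _ := by gcongr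
  have h6 : t ^ s ≤ 2 := by
    calc t ^ s ≤ 2 ^ s := by
          gcongr; linarith [Real.pi_le_four]
      _ ≤ 2 := rpow_le_self_of (by norm_num) hs1
  have hp : 0 < t ^ s := by positivity
  calc s / 10 ≤ (t ^ s)⁻¹ * s / 5 := by
        have : (1:ℝ)/2 ≤ (t ^ s)⁻¹ := by
          rw [one_div]; gcongr
        nlinarith
    _ = t ^ (-(2 * s)) * (s * (t ^ s / 5)) := by
        rw [show -(2 * s) = -s + -s by ring, Real.rpow_add ht0, Real.rpow_neg ht0.le]
        field_simp
    _ ≤ t ^ (-(2 * s)) * (s * Real.sin t ^ s) := by gcongr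
    _ ≤ _ := by gcongr


lemma lint_abs (F : ℝ → ENNReal) : ∫⁻ z, F |z| = 2 * ∫⁻ z in Ioi (0:ℝ), F z := by
  rw [← lintegral_add_compl (fun z : ℝ => F |z|) (measurableSet_Ioi (a := (0:ℝ))), compl_Ioi, two_mul]
  congr 1
  · exact setLIntegral_congr_fun measurableSet_Ioi (fun z hz => by
      rw [abs_of_pos hz])
  · have h := (Measure.measurePreserving_neg (volume : Measure ℝ)).setLIntegral_comp_preimage_emb
      (MeasurableEquiv.neg ℝ).measurableEmbedding (fun z => F |z|) (Ici 0)
    have e : (Neg.neg ⁻¹' (Ici (0:ℝ))) = Iic 0 := by ext z; simp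
    rw [e] at h
    simp only [abs_neg] at h
    rw [h, setLIntegral_congr Ioi_ae_eq_Ici.symm]
    exact setLIntegral_congr_fun measurableSet_Ioi (fun z hz => by
      rw [abs_of_pos hz])

lemma lint_abs_set (S : Set ℝ) (hS : MeasurableSet S) (F : ℝ → ENNReal) :
    ∫⁻ z in {z : ℝ | |z| ∈ S}, F |z| = 2 * ∫⁻ z in S ∩ Ioi (0:ℝ), F z := by
  have hS' : MeasurableSet {z : ℝ | |z| ∈ S} := measurableSet_preimage (by fun_prop) hS
  rw [← lintegral_indicator hS']
  have : (fun z : ℝ => ({z : ℝ | |z| ∈ S}.indicator (fun z => F |z|)) z) =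
      fun z => (S.indicator F) |z| := by
    funext z
    by_cases h : |z| ∈ S
    · rw [indicator_of_mem (show z ∈ {z : ℝ | |z| ∈ S} from h), indicator_of_mem h]
    · rw [indicator_of_notMem (show z ∉ {z : ℝ | |z| ∈ S} from h), indicator_of_notMem h]
  rw [this, lint_abs, lintegral_indicator hS, Measure.restrict_restrict hS]

lemma lint_near {τ r : ℝ} (hτ : 0 < τ) (hr : 0 ≤ r) :
    ∫⁻ z in {z : ℝ | |z| ≤ r}, ENNReal.ofReal (|z| ^ (τ - 1)) = ENNReal.ofReal (2 * (r ^ τ / τ)) := by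
  have h := lint_abs_set (Iic r) measurableSet_Iic (fun z => ENNReal.ofReal (z ^ (τ - 1)))
  simp only [mem_Iic] at h
  rw [h, inter_comm, Ioi_inter_Iic, ENNReal.ofReal_mul (by norm_num)]
  congr 1
  · simp
  · rw [← ofReal_integral_eq_lintegral_ofReal]
    · rw [← intervalIntegral.integral_of_le hr, integral_rpow (Or.inl (by linarith))]
      simp [Real.zero_rpow hτ.ne']
    · rw [← IntegrableOn, ← intervalIntegrable_iff_integrableOn_Ioc_of_le hr]
      exact intervalIntegral.intervalIntegrable_rpow' (by linarith)
    · filter_upwards [ae_restrict_mem measurableSet_Ioc] with z hz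
      exact Real.rpow_nonneg hz.1.le _

lemma lint_far {σ r : ℝ} (hσ : 0 < σ) (hr : 0 < r) :
    ∫⁻ z in {z : ℝ | r < |z|}, ENNReal.ofReal (|z| ^ (-(1 + σ))) =
      ENNReal.ofReal (2 * (r ^ (-σ) / σ)) := by
  have h := lint_abs_set (Ioi r) measurableSet_Ioi (fun z => ENNReal.ofReal (z ^ (-(1 + σ))))
  simp only [mem_Ioi] at h
  rw [h, Ioi_inter_Ioi, sup_eq_left.2 hr.le, ENNReal.ofReal_mul (by norm_num)]
  congr 1
  · simp
  · rw [← ofReal_integral_eq_lintegral_ofReal]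
    · rw [integral_Ioi_rpow_of_lt (by linarith) hr, show -(1 + σ) + 1 = -σ by ring, neg_div_neg_eq]
    · exact integrableOn_Ioi_rpow_of_lt (by linarith) hr
    · filter_upwards [ae_restrict_mem measurableSet_Ioi] with z hz
      exact Real.rpow_nonneg (hr.le.trans (le_of_lt hz)) _

lemma vv_int0 {s a : ℝ} (hs : 0 < s) (hs1 : s ≤ 1) (ha : 0 < a) (ha1 : a ≤ 1) :
    IntervalIntegrable (vv s a) volume 0 (π / 2) := by
  have h : IntervalIntegrable (fun t : ℝ => 5 * t ^ (a - 1)) volume 0 (π / 2) :=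
    (intervalIntegral.intervalIntegrable_rpow' (by linarith)).const_mul 5
  refine h.mono_fun' (vv_meas s a).aestronglyMeasurable ?_
  filter_upwards [ae_restrict_mem measurableSet_uIoc] with t ht
  rw [uIoc_of_le (by positivity)] at ht
  exact vv_le_rpow hs hs1 ha ha1 ht.1 ht.2

lemma vv_int {s a : ℝ} (hs : 0 < s) (hs1 : s ≤ 1) (ha : 0 < a) (ha1 : a ≤ 1) (x y : ℝ) :
    IntervalIntegrable (vv s a) volume x y := by
  have h0 := vv_int0 hs hs1 ha ha1
  have h1 : IntervalIntegrable (vv s a) volume (π / 2) π := by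
    have := (h0.comp_sub_left π).symm
    simp only [vv_pi_sub, sub_zero] at this
    rwa [show π - π / 2 = π / 2 by ring] at this
  have h2 := h0.trans h1
  have h3 : IntervalIntegrable (vv s a) volume (-π) 0 := by
    have := (h2.comp_sub_left 0).symm
    simp only [zero_sub, vv_neg, neg_zero] at this
    have h5 := this.neg
    have e : (-fun x => -vv s a x) = vv s a := by funext x; simp
    rwa [e] at h5
  exact (vv_periodic s a).intervalIntegrable (t := -π) Real.two_pi_pos.ne'
    (by rw [show -π + 2 * π = π by ring]; exact h3.trans h2) x y

noncomputable def uu (s a x : ℝ) : ℝ := ∫ t in (0:ℝ)..x, vv s a t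

lemma uu_zero (s a : ℝ) : uu s a 0 = 0 := by simp [uu]

lemma uu_sub {s a : ℝ} (hs : 0 < s) (hs1 : s ≤ 1) (ha : 0 < a) (ha1 : a ≤ 1) (x y : ℝ) :
    uu s a y - uu s a x = ∫ t in x..y, vv s a t :=
  intervalIntegral.integral_interval_sub_left (vv_int hs hs1 ha ha1 _ _) (vv_int hs hs1 ha ha1 _ _)

lemma uu_neg (s a x : ℝ) : uu s a (-x) = uu s a x := by
  unfold uu
  have h := intervalIntegral.integral_comp_neg (a := 0) (b := x) (fun t => vv s a t)
  simp only [vv_neg, neg_zero] at h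
  rw [intervalIntegral.integral_symm, ← h, intervalIntegral.integral_neg, neg_neg]

lemma uu_pi_sub {s a : ℝ} (hs : 0 < s) (hs1 : s ≤ 1) (ha : 0 < a) (ha1 : a ≤ 1) (x : ℝ) :
    uu s a (π - x) = uu s a π - uu s a x := by
  have h1 := uu_sub hs hs1 ha ha1 (π - x) π
  have h := intervalIntegral.integral_comp_sub_left (a := 0) (b := x) (fun t => vv s a t) π
  simp only [vv_pi_sub, sub_zero] at h
  rw [← h] at h1
  have : uu s a x = ∫ t in (0:ℝ)..x, vv s a t := rfl
  linarith

lemma uu_add_pi {s a : ℝ} (hs : 0 < s) (hs1 : s ≤ 1) (ha : 0 < a) (ha1 : a ≤ 1) (x : ℝ) :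
    uu s a (x + π) = uu s a π - uu s a x := by
  rw [show x + π = π - (-x) by ring, uu_pi_sub hs hs1 ha ha1, uu_neg]

lemma uu_periodic {s a : ℝ} (hs : 0 < s) (hs1 : s ≤ 1) (ha : 0 < a) (ha1 : a ≤ 1) :
    Function.Periodic (uu s a) (2 * π) := by
  intro x
  rw [show x + 2 * π = x + π + π by ring, uu_add_pi hs hs1 ha ha1, uu_add_pi hs hs1 ha ha1]
  ring

noncomputable def fold (x : ℝ) : ℝ := ‖(x : AddCircle (2 * π))‖

lemma fold_eq {F : ℝ → ℝ} (hp : Function.Periodic F (2 * π)) (he : ∀ x, F (-x) = F x) (x : ℝ) :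
    F (fold x) = F x := by
  unfold fold
  rw [AddCircle.norm_eq]
  have h1 : F (x - round ((2 * π)⁻¹ * x) * (2 * π)) = F x := hp.sub_int_mul_eq _
  rcases abs_choice (x - round ((2 * π)⁻¹ * x) * (2 * π)) with h | h
  · rw [h, h1]
  · rw [h, he, h1]

lemma fold_nonneg (x : ℝ) : 0 ≤ fold x := norm_nonneg _

lemma fold_le (x : ℝ) : fold x ≤ π := by
  have := AddCircle.norm_le_half_period (2 * π) (x := (x : AddCircle (2 * π))) Real.two_pi_pos.ne'
  rw [abs_of_pos Real.two_pi_pos] at this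
  unfold fold
  linarith

lemma fold_lip (x y : ℝ) : |fold x - fold y| ≤ |x - y| := by
  unfold fold
  refine (abs_norm_sub_norm_le _ _).trans ?_
  rw [← AddCircle.coe_sub]
  exact QuotientAddGroup.norm_mk_le_norm

lemma uu_strict {s a : ℝ} (hs : 0 < s) (hs1 : s ≤ 1) (ha : 0 < a) (ha1 : a ≤ 1) {x y : ℝ}
    (hx : 0 ≤ x) (hxy : x < y) (hy : y ≤ π) : uu s a x < uu s a y := by
  have h := uu_sub hs hs1 ha ha1 x y
  have : 0 < ∫ t in x..y, vv s a t :=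
    intervalIntegral.intervalIntegral_pos_of_pos_on (vv_int hs hs1 ha ha1 _ _)
      (fun t ht => vv_pos hs (Real.sin_pos_of_pos_of_lt_pi (by linarith [ht.1]) (by linarith [ht.2]))) hxy
  linarith

lemma uu_mono {s a : ℝ} (hs : 0 < s) (hs1 : s ≤ 1) (ha : 0 < a) (ha1 : a ≤ 1) {x y : ℝ}
    (hx : 0 ≤ x) (hxy : x ≤ y) (hy : y ≤ π) : uu s a x ≤ uu s a y := by
  rcases hxy.eq_or_lt with h | h
  · rw [h]
  · exact (uu_strict hs hs1 ha ha1 hx h hy).le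

lemma uu_mem {s a : ℝ} (hs : 0 < s) (hs1 : s ≤ 1) (ha : 0 < a) (ha1 : a ≤ 1) (x : ℝ) :
    uu s a x ∈ Icc 0 (uu s a π) := by
  rw [← fold_eq (uu_periodic hs hs1 ha ha1) (uu_neg s a) x]
  constructor
  · rw [← uu_zero s a]
    exact uu_mono hs hs1 ha ha1 le_rfl (fold_nonneg x) (fold_le x)
  · exact uu_mono hs hs1 ha ha1 (fold_nonneg x) (fold_le x) le_rfl

lemma uu_cont {s a : ℝ} (hs : 0 < s) (hs1 : s ≤ 1) (ha : 0 < a) (ha1 : a ≤ 1) :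
    Continuous (uu s a) :=
  intervalIntegral.continuous_primitive (fun x y => vv_int hs hs1 ha ha1 x y) 0

lemma uu_hol0 {s a : ℝ} (hs : 0 < s) (hs1 : s ≤ 1) (ha : 0 < a) (ha1 : a ≤ 1) {x y : ℝ}
    (hx : 0 ≤ x) (hxy : x ≤ y) (hy : y ≤ π / 2) : uu s a y - uu s a x ≤ 5 / a * (y - x) ^ a := by
  rw [uu_sub hs hs1 ha ha1]
  have hi : IntervalIntegrable (fun t : ℝ => 5 * t ^ (a - 1)) volume x y :=
    (intervalIntegral.intervalIntegrable_rpow' (by linarith)).const_mul 5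
  have h1 : ∫ t in x..y, vv s a t ≤ ∫ t in x..y, 5 * t ^ (a - 1) := by
    refine intervalIntegral.integral_mono_on_of_le_Ioo hxy (vv_int hs hs1 ha ha1 _ _) hi ?_
    intro t ht
    exact (le_abs_self _).trans (vv_le_rpow hs hs1 ha ha1 (by linarith [ht.1]) (by linarith [ht.2]))
  refine h1.trans ?_
  rw [intervalIntegral.integral_const_mul, integral_rpow (Or.inl (by linarith)), sub_add_cancel]
  have h2 : y ^ a ≤ x ^ a + (y - x) ^ a := by
    have := Real.rpow_add_le_add_rpow hx (sub_nonneg.2 hxy) ha.le ha1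
    rwa [add_sub_cancel] at this
  have : 5 * ((y ^ a - x ^ a) / a) = 5 / a * (y ^ a - x ^ a) := by ring
  rw [this]
  gcongr
  linarith

lemma uu_hol1 {s a : ℝ} (hs : 0 < s) (hs1 : s ≤ 1) (ha : 0 < a) (ha1 : a ≤ 1) {x y : ℝ}
    (hx : 0 ≤ x) (hxy : x ≤ y) (hy : y ≤ π) : uu s a y - uu s a x ≤ 10 / a * (y - x) ^ a := by
  have hle : 5 / a * (y - x) ^ a ≤ 10 / a * (y - x) ^ a := by
    have : 0 ≤ (y - x) ^ a := Real.rpow_nonneg (by linarith) _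
    gcongr; norm_num
  have key : ∀ {x y : ℝ}, π / 2 ≤ x → x ≤ y → y ≤ π → uu s a y - uu s a x ≤ 5 / a * (y - x) ^ a := by
    intro x y hx hxy hy
    have := uu_hol0 hs hs1 ha ha1 (x := π - y) (y := π - x) (by linarith) (by linarith) (by linarith)
    rw [uu_pi_sub hs hs1 ha ha1, uu_pi_sub hs hs1 ha ha1] at this
    rw [show π - x - (π - y) = y - x by ring] at this
    linarith
  rcases le_total y (π / 2) with h1 | h1
  · exact (uu_hol0 hs hs1 ha ha1 hx hxy h1).trans hle
  rcases le_total (π / 2) x with h2 | h2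
  · exact (key h2 hxy hy).trans hle
  have A := uu_hol0 hs hs1 ha ha1 hx h2 le_rfl
  have B := key le_rfl h1 hy
  have A' : 5 / a * (π / 2 - x) ^ a ≤ 5 / a * (y - x) ^ a := by
    have : 0 ≤ π / 2 - x := by linarith
    gcongr
  have B' : 5 / a * (y - π / 2) ^ a ≤ 5 / a * (y - x) ^ a := by
    have : 0 ≤ y - π / 2 := by linarith
    gcongr
  have : 10 / a * (y - x) ^ a = 5 / a * (y - x) ^ a + 5 / a * (y - x) ^ a := by ring
  linarith

lemma uu_hol {s a : ℝ} (hs : 0 < s) (hs1 : s ≤ 1) (ha : 0 < a) (ha1 : a ≤ 1) (x y : ℝ) :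
    |uu s a x - uu s a y| ≤ 10 / a * |x - y| ^ a := by
  have h1 : |uu s a (fold x) - uu s a (fold y)| ≤ 10 / a * |fold x - fold y| ^ a := by
    rcases le_total (fold x) (fold y) with h | h
    · rw [abs_sub_comm, abs_sub_comm (fold x), abs_of_nonneg, abs_of_nonneg (by linarith)]
      · exact uu_hol1 hs hs1 ha ha1 (fold_nonneg _) h (fold_le _)
      · linarith [uu_mono hs hs1 ha ha1 (fold_nonneg _) h (fold_le _)]
    · rw [abs_of_nonneg, abs_of_nonneg (by linarith)]
      · exact uu_hol1 hs hs1 ha ha1 (fold_nonneg _) h (fold_le _)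
      · linarith [uu_mono hs hs1 ha ha1 (fold_nonneg _) h (fold_le _)]
  rw [fold_eq (uu_periodic hs hs1 ha ha1) (uu_neg s a), fold_eq (uu_periodic hs hs1 ha ha1) (uu_neg s a)] at h1
  refine h1.trans ?_
  have := fold_lip x y
  gcongr


lemma vv_abs_int {s a : ℝ} (hs : 0 < s) (hs1 : s ≤ 1) (ha : 0 < a) (ha1 : a ≤ 1) (x : ℝ) :
    ∫⁻ z in Ico x (x + π), ‖vv s a z‖ₑ = ENNReal.ofReal (∫ z in (0:ℝ)..π, |vv s a z|) := by
  have hper : Function.Periodic (fun z => |vv s a z|) π := by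
    intro z; simp only [vv_add_pi, abs_neg]
  have h := hper.intervalIntegral_add_eq x 0
  rw [zero_add] at h
  rw [← h, setLIntegral_congr Ico_ae_eq_Ioc, intervalIntegral.integral_of_le (by linarith [Real.pi_pos]),
    ofReal_integral_eq_lintegral_ofReal]
  · refine lintegral_congr fun z => ?_
    rw [Real.enorm_eq_ofReal_abs]
  · exact (((intervalIntegrable_iff_integrableOn_Ioc_of_le (by linarith [Real.pi_pos])).1
      (vv_int hs hs1 ha ha1 x (x + π))).abs)
  · exact Eventually.of_forall fun z => abs_nonneg _

lemma tail_pos {s a : ℝ} (hs : 0 < s) (hs1 : s ≤ 1) (ha : 0 < a) (ha1 : a ≤ 1) :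
    ∃ C : ℝ, 0 ≤ C ∧ ∀ t : ℝ, ∫⁻ z in Ioi (π / 4), ‖vv s a (t + z)‖ₑ * ENNReal.ofReal (|z| ^ (-(1 + 2 * s)))
      ≤ ENNReal.ofReal C := by
  set J := ∫ z in (0:ℝ)..π, |vv s a z| with hJ
  have hJ0 : 0 ≤ J := intervalIntegral.integral_nonneg Real.pi_pos.le (fun z _ => abs_nonneg _)
  have hpi := Real.pi_pos
  have hpi3 := Real.pi_gt_three
  let k : ℕ → ℝ := fun n => (π / 4 + n * π) ^ (-(1 + 2 * s))
  have hk0 : ∀ n, 0 ≤ k n := fun n => by positivity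
  have hk : Summable k := by
    have h1 : Summable (fun n : ℕ => 1 / |(n:ℝ) + 1 / 4| ^ (1 + 2 * s)) :=
      (Real.summable_one_div_nat_add_rpow (1/4) (1 + 2 * s)).2 (by linarith)
    refine Summable.of_nonneg_of_le hk0 (fun n => ?_) h1
    have hn : 0 < (n:ℝ) + 1 / 4 := by positivity
    rw [abs_of_pos hn, one_div, ← Real.rpow_neg hn.le]
    refine Real.rpow_le_rpow_of_nonpos hn ?_ (by linarith)
    have : (0:ℝ) ≤ n := by positivity
    nlinarith
  refine ⟨∑' n, k n * J, tsum_nonneg fun n => mul_nonneg (hk0 n) hJ0, fun t => ?_⟩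
  have hsub : Ioi (π / 4) ⊆ ⋃ n : ℕ, Ico (π / 4 + n * π) (π / 4 + n * π + π) := by
    intro z hz
    have hz' : π / 4 < z := hz
    have hr : 0 ≤ (z - π / 4) / π := div_nonneg (by linarith) hpi.le
    refine mem_iUnion.2 ⟨⌊(z - π / 4) / π⌋₊, ?_, ?_⟩
    · have := Nat.floor_le hr
      rw [le_div_iff₀ hpi] at this
      linarith
    · have := Nat.lt_floor_add_one ((z - π / 4) / π)
      rw [div_lt_iff₀ hpi] at this
      linarith
  calc _ ≤ ∫⁻ z in ⋃ n : ℕ, Ico (π / 4 + n * π) (π / 4 + n * π + π),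
        ‖vv s a (t + z)‖ₑ * ENNReal.ofReal (|z| ^ (-(1 + 2 * s))) := lintegral_mono_set hsub
    _ ≤ ∑' n : ℕ, ∫⁻ z in Ico (π / 4 + n * π) (π / 4 + n * π + π),
        ‖vv s a (t + z)‖ₑ * ENNReal.ofReal (|z| ^ (-(1 + 2 * s))) := lintegral_iUnion_le _ _
    _ ≤ ∑' n : ℕ, ENNReal.ofReal (k n * J) := by
      refine ENNReal.tsum_le_tsum fun n => ?_
      calc _ ≤ ∫⁻ z in Ico (π / 4 + n * π) (π / 4 + n * π + π),
              ‖vv s a (t + z)‖ₑ * ENNReal.ofReal (k n) := by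
            refine setLIntegral_mono' measurableSet_Ico fun z hz => ?_
            gcongr
            have h0 : 0 < π / 4 + n * π := by positivity
            rw [abs_of_pos (h0.trans_le hz.1)]
            exact Real.rpow_le_rpow_of_nonpos h0 hz.1 (by linarith)
        _ = (∫⁻ z in Ico (π / 4 + n * π) (π / 4 + n * π + π), ‖vv s a (t + z)‖ₑ) * ENNReal.ofReal (k n) := by
            rw [lintegral_mul_const]
            exact ((vv_meas s a).comp (measurable_const_add t)).enorm
        _ = ENNReal.ofReal J * ENNReal.ofReal (k n) := by
            congr 1
            rw [hJ, ← vv_abs_int hs hs1 ha ha1 (t + (π / 4 + n * π))]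
            have h := (measurePreserving_add_left (volume : Measure ℝ) t).setLIntegral_comp_preimage_emb
              (measurableEmbedding_addLeft t) (fun z => ‖vv s a z‖ₑ)
              (Ico (t + (π / 4 + n * π)) (t + (π / 4 + n * π) + π))
            rw [← h]
            congr 2
            ext z
            simp only [mem_Ico, mem_preimage]
            constructor <;> rintro ⟨h1, h2⟩ <;> constructor <;> linarith
        _ = _ := by rw [← ENNReal.ofReal_mul hJ0, mul_comm]
    _ = _ := by
      rw [ENNReal.ofReal_tsum_of_nonneg (fun n => mul_nonneg (hk0 n) hJ0) (hk.mul_right J)]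

lemma tail {s a : ℝ} (hs : 0 < s) (hs1 : s ≤ 1) (ha : 0 < a) (ha1 : a ≤ 1) :
    ∃ C : ℝ, 0 ≤ C ∧ ∀ t : ℝ, ∫⁻ z in {z : ℝ | π / 4 < |z|},
      ‖vv s a (t + z)‖ₑ * ENNReal.ofReal (|z| ^ (-(1 + 2 * s))) ≤ ENNReal.ofReal C := by
  obtain ⟨C, hC, h⟩ := tail_pos hs hs1 ha ha1
  refine ⟨C + C, by positivity, fun t => ?_⟩
  have hset : {z : ℝ | π / 4 < |z|} = Ioi (π / 4) ∪ (Neg.neg ⁻¹' (Ioi (π / 4))) := by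
    ext z; simp only [mem_setOf_eq, lt_abs, mem_union, mem_preimage, mem_Ioi]
  rw [hset, ENNReal.ofReal_add hC hC]
  refine (lintegral_union_le _ _ _).trans (add_le_add (h t) ?_)
  have h2 := (Measure.measurePreserving_neg (volume : Measure ℝ)).setLIntegral_comp_preimage_emb
      (MeasurableEquiv.neg ℝ).measurableEmbedding
      (fun z => ‖vv s a (-t + z)‖ₑ * ENNReal.ofReal (|z| ^ (-(1 + 2 * s)))) (Ioi (π / 4))
  have h3 := h (-t)
  rw [← h2] at h3
  refine le_trans (le_of_eq ?_) h3
  refine lintegral_congr fun z => ?_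
  rw [← neg_add, vv_neg, enorm_neg, abs_neg]

lemma inner_pt {s a t z : ℝ} (hs : 0 < s) (hs1 : s ≤ 1 / 2) (ha : 0 < a) (ha1 : a ≤ 1) (ht0 : 0 < t)
    (ht1 : t ≤ π / 2) (hz0 : 0 < |z|) (hz : |z| ≤ π / 4) :
    |vv s a (t + z)| * |z| ^ (-(1 + 2 * s)) ≤ 20 * vv s a t * |z| ^ (-(1 + 2 * s)) +
      ({z : ℝ | t / 2 < |z|}.indicator (fun z => 15 * vv s a t * t ^ (-s) * |z| ^ (-(1 + s))) z +
      {p : ℝ | |p| ≤ t / 2}.indicator (fun p => 40 * vv s a t * t ^ (1 - a) * t ^ (-(1 + 2 * s)) *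
        |p| ^ (a - 1)) (t + z)) := by
  have hst : 0 < Real.sin t := by linarith [sin_low' ht0.le ht1]
  have hv := vv_pos (a := a) hs hst
  have hk : 0 < |z| ^ (-(1 + 2 * s)) := by positivity
  by_cases hp0 : t + z = 0
  · rw [hp0, vv_zero (by simp), abs_zero, zero_mul]
    have h1 : 0 ≤ {z : ℝ | t / 2 < |z|}.indicator (fun z => 15 * vv s a t * t ^ (-s) * |z| ^ (-(1 + s))) z :=
      indicator_nonneg (fun z _ => by positivity) _
    have h2 : 0 ≤ {p : ℝ | |p| ≤ t / 2}.indicator (fun p => 40 * vv s a t * t ^ (1 - a) * t ^ (-(1 + 2 * s)) *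
        |p| ^ (a - 1)) 0 := indicator_nonneg (fun z _ => by positivity) _
    positivity
  have hp0' := abs_pos.2 hp0
  have htz := abs_add_le t z
  rw [abs_of_pos ht0] at htz
  have h := vv_cmp' (a := a) hs (by linarith) ha ha1 ht0 ht1 (p := t + z) (by linarith) hp0
  have A : (|t + z| / t) ^ s * |z| ^ (-(1 + 2 * s)) ≤ 2 * |z| ^ (-(1 + 2 * s)) +
      {z : ℝ | t / 2 < |z|}.indicator (fun z => 3 * t ^ (-s) * |z| ^ (-(1 + s))) z := by
    by_cases hzt : t / 2 < |z|
    · rw [indicator_of_mem (show z ∈ {z : ℝ | t / 2 < |z|} from hzt)]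
      have : (|t + z| / t) ^ s * |z| ^ (-(1 + 2 * s)) ≤ 3 * t ^ (-s) * |z| ^ (-(1 + s)) := by
        calc _ ≤ (3 * |z| / t) ^ s * |z| ^ (-(1 + 2 * s)) := by gcongr; linarith
          _ = 3 ^ s * (t ^ (-s) * (|z| ^ s * |z| ^ (-(1 + 2 * s)))) := by
              rw [Real.div_rpow (by positivity) ht0.le, Real.mul_rpow (by norm_num) hz0.le,
                Real.rpow_neg ht0.le]
              ring
          _ = 3 ^ s * (t ^ (-s) * |z| ^ (-(1 + s))) := by
              rw [← Real.rpow_add hz0]; congr 3; ring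
          _ ≤ 3 * (t ^ (-s) * |z| ^ (-(1 + s))) := by
              gcongr; exact rpow_le_self_of (by norm_num) (by linarith)
          _ = _ := by ring
      linarith
    · rw [indicator_of_notMem (show z ∉ {z : ℝ | t / 2 < |z|} from hzt), add_zero]
      gcongr
      push Not at hzt
      calc (|t + z| / t) ^ s ≤ 2 ^ s := by
            gcongr
            rw [div_le_iff₀ ht0]; linarith
        _ ≤ 2 := rpow_le_self_of (by norm_num) (by linarith)
  have B : |t + z| ^ (a - 1) * t ^ (1 - a) * |z| ^ (-(1 + 2 * s)) ≤ 2 * |z| ^ (-(1 + 2 * s)) +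
      {p : ℝ | |p| ≤ t / 2}.indicator (fun p => 8 * t ^ (1 - a) * t ^ (-(1 + 2 * s)) *
        |p| ^ (a - 1)) (t + z) := by
    by_cases hpt : |t + z| ≤ t / 2
    · rw [indicator_of_mem (show t + z ∈ {p : ℝ | |p| ≤ t / 2} from hpt)]
      have hzz : t / 2 ≤ |z| := by
        have := abs_sub_abs_le_abs_sub t (-z)
        rw [abs_of_pos ht0, abs_neg, sub_neg_eq_add] at this
        linarith
      have h1 : |z| ^ (-(1 + 2 * s)) ≤ 8 * t ^ (-(1 + 2 * s)) := by
        calc |z| ^ (-(1 + 2 * s)) ≤ (t / 2) ^ (-(1 + 2 * s)) :=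
              Real.rpow_le_rpow_of_nonpos (by positivity) hzz (by linarith)
          _ = 2 ^ (1 + 2 * s) * t ^ (-(1 + 2 * s)) := by
              rw [Real.div_rpow ht0.le (by norm_num), Real.rpow_neg (x := 2) (by norm_num)]
              field_simp
          _ ≤ 2 ^ (3:ℝ) * t ^ (-(1 + 2 * s)) := by
              gcongr <;> linarith
          _ = _ := by norm_num
      calc _ ≤ |t + z| ^ (a - 1) * t ^ (1 - a) * (8 * t ^ (-(1 + 2 * s))) := by gcongr
        _ = 8 * t ^ (1 - a) * t ^ (-(1 + 2 * s)) * |t + z| ^ (a - 1) := by ring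
        _ ≤ _ := by linarith
    · rw [indicator_of_notMem (show t + z ∉ {p : ℝ | |p| ≤ t / 2} from hpt), add_zero]
      gcongr
      push Not at hpt
      calc |t + z| ^ (a - 1) * t ^ (1 - a) ≤ (t / 2) ^ (a - 1) * t ^ (1 - a) := by
            gcongr ?_ * _
            exact Real.rpow_le_rpow_of_nonpos (by positivity) hpt.le (by linarith)
        _ = 2 ^ (1 - a) := by
            rw [Real.div_rpow ht0.le (by norm_num), show a - 1 = -(1 - a) by ring,
              Real.rpow_neg ht0.le, Real.rpow_neg (by norm_num)]
            field_simp
        _ ≤ 2 := rpow_le_self_of (by norm_num) (by linarith)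
  have hind1 : {z : ℝ | t / 2 < |z|}.indicator (fun z => 15 * vv s a t * t ^ (-s) * |z| ^ (-(1 + s))) z
     = 5 * vv s a t * {z : ℝ | t / 2 < |z|}.indicator (fun z => 3 * t ^ (-s) * |z| ^ (-(1 + s))) z := by
    by_cases hzt : z ∈ {z : ℝ | t / 2 < |z|}
    · rw [indicator_of_mem hzt, indicator_of_mem hzt]; ring
    · rw [indicator_of_notMem hzt, indicator_of_notMem hzt]; ring
  have hind2 : {p : ℝ | |p| ≤ t / 2}.indicator (fun p => 40 * vv s a t * t ^ (1 - a) * t ^ (-(1 + 2 * s)) *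
        |p| ^ (a - 1)) (t + z)
     = 5 * vv s a t * {p : ℝ | |p| ≤ t / 2}.indicator (fun p => 8 * t ^ (1 - a) * t ^ (-(1 + 2 * s)) *
        |p| ^ (a - 1)) (t + z) := by
    by_cases hzt : t + z ∈ {p : ℝ | |p| ≤ t / 2}
    · rw [indicator_of_mem hzt, indicator_of_mem hzt]; ring
    · rw [indicator_of_notMem hzt, indicator_of_notMem hzt]; ring
  rw [hind1, hind2]
  calc _ ≤ 5 * vv s a t * ((|t + z| / t) ^ s + |t + z| ^ (a - 1) * t ^ (1 - a)) * |z| ^ (-(1 + 2 * s)) := by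
        gcongr
    _ = 5 * vv s a t * ((|t + z| / t) ^ s * |z| ^ (-(1 + 2 * s)) +
          |t + z| ^ (a - 1) * t ^ (1 - a) * |z| ^ (-(1 + 2 * s))) := by ring
    _ ≤ _ := mul_le_mul_of_nonneg_left (add_le_add A B) (by positivity)
    _ = _ := by ring

lemma ofReal_ind (S : Set ℝ) (f : ℝ → ℝ) (z : ℝ) :
    ENNReal.ofReal (S.indicator f z) = S.indicator (fun z => ENNReal.ofReal (f z)) z := by
  by_cases h : z ∈ S
  · rw [indicator_of_mem h, indicator_of_mem h]
  · rw [indicator_of_notMem h, indicator_of_notMem h, ENNReal.ofReal_zero]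

lemma inner {s a : ℝ} (hs : 0 < s) (hs1 : s ≤ 1 / 2) (ha : 0 < a) (ha1 : a ≤ 1) :
    ∃ C : ℝ, 0 ≤ C ∧ ∀ t δ : ℝ, 0 < t → t ≤ π / 2 → 0 < δ →
      ∫⁻ z in {z : ℝ | δ < |z|}, ‖vv s a (t + z)‖ₑ * ENNReal.ofReal (|z| ^ (-(1 + 2 * s)))
        ≤ ENNReal.ofReal (C * ((δ ^ (-(2 * s)) + t ^ (-(2 * s))) * vv s a t)) := by
  obtain ⟨C, hC, htail⟩ := tail hs (by linarith) ha ha1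
  refine ⟨20 / s + (60 / s + 80 / a + C * (10 / s)), by positivity, ?_⟩
  intro t δ ht0 ht1 hδ
  have hst : 0 < Real.sin t := by linarith [sin_low' ht0.le ht1]
  have hv := vv_pos (a := a) hs hst
  set F : ℝ → ENNReal := fun z => ‖vv s a (t + z)‖ₑ * ENNReal.ofReal (|z| ^ (-(1 + 2 * s))) with hF
  set A : ℝ → ℝ := fun z => 20 * vv s a t * |z| ^ (-(1 + 2 * s)) with hA
  set B : ℝ → ℝ := fun z => 15 * vv s a t * t ^ (-s) * |z| ^ (-(1 + s)) with hB
  set G : ℝ → ℝ := fun p => 40 * vv s a t * t ^ (1 - a) * t ^ (-(1 + 2 * s)) * |p| ^ (a - 1) with hG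
  have mS : ∀ r : ℝ, MeasurableSet {z : ℝ | r < |z|} := fun r =>
    measurableSet_lt measurable_const (by fun_prop)
  have mS' : ∀ r : ℝ, MeasurableSet {z : ℝ | |z| ≤ r} := fun r =>
    measurableSet_le (by fun_prop) measurable_const
  have mA : Measurable (fun z => ENNReal.ofReal (A z)) := by fun_prop
  have mB : Measurable (fun z => ENNReal.ofReal (B z)) := by fun_prop
  have mG : Measurable (fun z => ENNReal.ofReal (G z)) := by fun_prop
  have hpt : ∀ z ∈ {z : ℝ | δ < |z|}, F z ≤ ENNReal.ofReal (A z) +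
      ({z : ℝ | t / 2 < |z|}.indicator (fun z => ENNReal.ofReal (B z)) z +
      ({p : ℝ | |p| ≤ t / 2}.indicator (fun p => ENNReal.ofReal (G p)) (t + z) +
        {z : ℝ | π / 4 < |z|}.indicator F z)) := by
    intro z hz
    have hz0 : 0 < |z| := hδ.trans hz
    by_cases hzp : π / 4 < |z|
    · rw [indicator_of_mem (show z ∈ {z : ℝ | π / 4 < |z|} from hzp)]
      rw [← add_assoc, ← add_assoc]
      exact le_add_self
    · have h := inner_pt hs hs1 ha ha1 ht0 ht1 hz0 (not_lt.1 hzp)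
      have h2 := ENNReal.ofReal_le_ofReal h
      rw [ENNReal.ofReal_mul (abs_nonneg _), ← Real.enorm_eq_ofReal_abs] at h2
      refine h2.trans ?_
      refine ENNReal.ofReal_add_le.trans ?_
      gcongr
      refine ENNReal.ofReal_add_le.trans ?_
      rw [ofReal_ind, ofReal_ind]
      gcongr
      exact le_self_add
  have I1 : ∫⁻ z in {z : ℝ | δ < |z|}, ENNReal.ofReal (A z) =
      ENNReal.ofReal (20 * vv s a t * (2 * (δ ^ (-(2 * s)) / (2 * s)))) := by
    rw [ENNReal.ofReal_mul (by positivity), ← lint_far (by linarith) hδ, ← lintegral_const_mul _ (by fun_prop)]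
    refine lintegral_congr fun z => ?_
    rw [← ENNReal.ofReal_mul (by positivity)]
  have I2 : ∫⁻ z in {z : ℝ | t / 2 < |z|}, ENNReal.ofReal (B z) =
      ENNReal.ofReal (15 * vv s a t * t ^ (-s) * (2 * ((t / 2) ^ (-s) / s))) := by
    rw [ENNReal.ofReal_mul (by positivity), ← lint_far hs (by positivity), ← lintegral_const_mul _ (by fun_prop)]
    refine lintegral_congr fun z => ?_
    rw [← ENNReal.ofReal_mul (by positivity)]
  have I3 : ∫⁻ z in {z : ℝ | |z| ≤ t / 2}, ENNReal.ofReal (G z) =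
      ENNReal.ofReal (40 * vv s a t * t ^ (1 - a) * t ^ (-(1 + 2 * s)) * (2 * ((t / 2) ^ a / a))) := by
    rw [ENNReal.ofReal_mul (by positivity), ← lint_near ha (by positivity), ← lintegral_const_mul _ (by fun_prop)]
    refine lintegral_congr fun z => ?_
    rw [← ENNReal.ofReal_mul (by positivity)]
  have e2 : 15 * vv s a t * t ^ (-s) * (2 * ((t / 2) ^ (-s) / s)) ≤ 60 / s * (t ^ (-(2 * s)) * vv s a t) := by
    have : (t / 2) ^ (-s) ≤ 2 * t ^ (-s) := by
      rw [Real.div_rpow ht0.le (by norm_num), Real.rpow_neg (x := 2) (by norm_num), div_inv_eq_mul, mul_comm]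
      gcongr
      exact rpow_le_self_of (by norm_num) (by linarith)
    have e : t ^ (-(2 * s)) = t ^ (-s) * t ^ (-s) := by rw [← Real.rpow_add ht0]; congr 1; ring
    rw [e]
    calc _ ≤ 15 * vv s a t * t ^ (-s) * (2 * ((2 * t ^ (-s)) / s)) := by gcongr
      _ = _ := by ring
  have e3 : 40 * vv s a t * t ^ (1 - a) * t ^ (-(1 + 2 * s)) * (2 * ((t / 2) ^ a / a)) ≤
      80 / a * (t ^ (-(2 * s)) * vv s a t) := by
    have h1 : (t / 2) ^ a ≤ t ^ a := by gcongr; linarith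
    calc _ ≤ 40 * vv s a t * t ^ (1 - a) * t ^ (-(1 + 2 * s)) * (2 * (t ^ a / a)) := by gcongr
      _ = 80 / a * ((t ^ (1 - a) * t ^ (-(1 + 2 * s)) * t ^ a) * vv s a t) := by ring
      _ = _ := by
        rw [← Real.rpow_add ht0, ← Real.rpow_add ht0]
        congr 4; ring
  have e4 : C ≤ C * (10 / s) * (t ^ (-(2 * s)) * vv s a t) := by
    have := vv_low_const (a := a) hs (by linarith) ha1 ht0 ht1
    calc C = C * (10 / s) * (s / 10) := by field_simp
      _ ≤ _ := by gcongr
  calc _ ≤ ∫⁻ z in {z : ℝ | δ < |z|}, (ENNReal.ofReal (A z) +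
      ({z : ℝ | t / 2 < |z|}.indicator (fun z => ENNReal.ofReal (B z)) z +
      ({p : ℝ | |p| ≤ t / 2}.indicator (fun p => ENNReal.ofReal (G p)) (t + z) +
        {z : ℝ | π / 4 < |z|}.indicator F z))) := setLIntegral_mono' (mS δ) hpt
    _ = (∫⁻ z in {z : ℝ | δ < |z|}, ENNReal.ofReal (A z)) + ∫⁻ z in {z : ℝ | δ < |z|},
      ({z : ℝ | t / 2 < |z|}.indicator (fun z => ENNReal.ofReal (B z)) z +
      ({p : ℝ | |p| ≤ t / 2}.indicator (fun p => ENNReal.ofReal (G p)) (t + z) +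
        {z : ℝ | π / 4 < |z|}.indicator F z)) := lintegral_add_left mA _
    _ ≤ (∫⁻ z in {z : ℝ | δ < |z|}, ENNReal.ofReal (A z)) + ∫⁻ z,
      ({z : ℝ | t / 2 < |z|}.indicator (fun z => ENNReal.ofReal (B z)) z +
      ({p : ℝ | |p| ≤ t / 2}.indicator (fun p => ENNReal.ofReal (G p)) (t + z) +
        {z : ℝ | π / 4 < |z|}.indicator F z)) := by gcongr; exact Measure.restrict_le_self
    _ = (∫⁻ z in {z : ℝ | δ < |z|}, ENNReal.ofReal (A z)) +
      ((∫⁻ z in {z : ℝ | t / 2 < |z|}, ENNReal.ofReal (B z)) +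
       ((∫⁻ z in {z : ℝ | |z| ≤ t / 2}, ENNReal.ofReal (G z)) +
        ∫⁻ z in {z : ℝ | π / 4 < |z|}, F z)) := by
      congr 1
      have mG' : Measurable (fun z => {p : ℝ | |p| ≤ t / 2}.indicator (fun p => ENNReal.ofReal (G p)) (t + z)) :=
        (mG.indicator (mS' _)).comp (measurable_const_add t)
      rw [lintegral_add_left (mB.indicator (mS _)), lintegral_indicator (mS _),
        lintegral_add_left mG',
        lintegral_indicator (mS _),
        lintegral_add_left_eq_self (fun z => {p : ℝ | |p| ≤ t / 2}.indicator (fun p => ENNReal.ofReal (G p)) z),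
        lintegral_indicator (mS' _)]
    _ ≤ ENNReal.ofReal (20 * vv s a t * (2 * (δ ^ (-(2 * s)) / (2 * s)))) +
        (ENNReal.ofReal (60 / s * (t ^ (-(2 * s)) * vv s a t)) +
         (ENNReal.ofReal (80 / a * (t ^ (-(2 * s)) * vv s a t)) +
          ENNReal.ofReal (C * (10 / s) * (t ^ (-(2 * s)) * vv s a t)))) := by
      rw [I1, I2, I3]
      refine add_le_add le_rfl (add_le_add (ENNReal.ofReal_le_ofReal e2)
        (add_le_add (ENNReal.ofReal_le_ofReal e3) ((htail t).trans (ENNReal.ofReal_le_ofReal e4))))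
    _ ≤ _ := by
      rw [← ENNReal.ofReal_add (by positivity) (by positivity),
        ← ENNReal.ofReal_add (by positivity) (by positivity),
        ← ENNReal.ofReal_add (by positivity) (by positivity)]
      apply ENNReal.ofReal_le_ofReal
      have hd : 0 < δ ^ (-(2 * s)) := by positivity
      have ht : 0 < t ^ (-(2 * s)) := by positivity
      have e : 20 * vv s a t * (2 * (δ ^ (-(2 * s)) / (2 * s))) = 20 / s * (δ ^ (-(2 * s)) * vv s a t) := by
        field_simp
      rw [e]
      have n1 : 0 ≤ 20 / s * (t ^ (-(2 * s)) * vv s a t) := by positivity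
      have n2 : 0 ≤ (60 / s + 80 / a + C * (10 / s)) * (δ ^ (-(2 * s)) * vv s a t) := by positivity
      nlinarith


/-- the (unnormalized) integrand -/
noncomputable def ph (s a x z : ℝ) : ℝ := (uu s a x - uu s a (x + z)) * |z| ^ (-(1 + 2 * s))

noncomputable def ww (s a x : ℝ) : ℝ := ∫ z, ph s a x z

lemma ph_meas {s a : ℝ} (hs : 0 < s) (hs1 : s ≤ 1) (ha : 0 < a) (ha1 : a ≤ 1) (x : ℝ) :
    Measurable (ph s a x) := by
  have := (uu_cont hs hs1 ha ha1).measurable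
  unfold ph
  fun_prop

lemma ph_near {s a : ℝ} (hs : 0 < s) (hs1 : s ≤ 1) (ha : 0 < a) (ha1 : a ≤ 1) (h2 : 2 * s < a)
    (x r : ℝ) (hr : 0 ≤ r) : ∫⁻ z in {z : ℝ | |z| ≤ r}, ‖ph s a x z‖ₑ ≤
      ENNReal.ofReal (10 / a * (2 * (r ^ (a - 2 * s) / (a - 2 * s)))) := by
  rw [ENNReal.ofReal_mul (by positivity), ← lint_near (by linarith) hr, ← lintegral_const_mul _ (by fun_prop)]
  refine lintegral_mono fun z => ?_
  rw [← ENNReal.ofReal_mul (by positivity), Real.enorm_eq_ofReal_abs]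
  apply ENNReal.ofReal_le_ofReal
  unfold ph
  rw [abs_mul, abs_of_nonneg (Real.rpow_nonneg (abs_nonneg z) _)]
  by_cases hz : z = 0
  · subst hz
    have : 0 ≤ 10 / a * |(0:ℝ)| ^ (a - 2 * s - 1) := by positivity
    simpa using this
  have hz0 := abs_pos.2 hz
  have h := uu_hol hs hs1 ha ha1 x (x + z)
  rw [show x - (x + z) = -z by ring, abs_neg] at h
  calc _ ≤ 10 / a * |z| ^ a * |z| ^ (-(1 + 2 * s)) := by gcongr
    _ = _ := by
      rw [mul_assoc, ← Real.rpow_add hz0]; congr 2; ring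

lemma mS_lt (r : ℝ) : MeasurableSet {z : ℝ | r < |z|} :=
  measurableSet_lt measurable_const (by fun_prop)

lemma mS_le (r : ℝ) : MeasurableSet {z : ℝ | |z| ≤ r} :=
  measurableSet_le (by fun_prop) measurable_const

lemma S_compl (r : ℝ) : {z : ℝ | |z| ≤ r}ᶜ = {z : ℝ | r < |z|} := by
  ext z; show ¬ (|z| ≤ r) ↔ r < |z|; exact not_le

lemma ph_integrable {s a : ℝ} (hs : 0 < s) (hs1 : s ≤ 1) (ha : 0 < a) (ha1 : a ≤ 1) (h2 : 2 * s < a)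
    (x : ℝ) : Integrable (ph s a x) := by
  refine ⟨(ph_meas hs hs1 ha ha1 x).aestronglyMeasurable, ?_⟩
  unfold HasFiniteIntegral
  rw [← lintegral_add_compl _ (mS_le 1), S_compl]
  refine ENNReal.add_lt_top.2 ⟨(ph_near hs hs1 ha ha1 h2 x 1 zero_le_one).trans_lt ENNReal.ofReal_lt_top, ?_⟩
  have hle : ∫⁻ z in {z : ℝ | 1 < |z|}, ‖ph s a x z‖ₑ ≤ ∫⁻ z in {z : ℝ | 1 < |z|},
      ENNReal.ofReal (uu s a π) * ENNReal.ofReal (|z| ^ (-(1 + 2 * s))) := by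
    refine lintegral_mono fun z => ?_
    rw [Real.enorm_eq_ofReal_abs, ph, abs_mul, ENNReal.ofReal_mul (abs_nonneg _),
      abs_of_nonneg (Real.rpow_nonneg (abs_nonneg z) _)]
    gcongr
    have h1 := uu_mem hs hs1 ha ha1 x
    have h2 := uu_mem hs hs1 ha ha1 (x + z)
    rw [abs_le]; constructor <;> linarith [h1.1, h1.2, h2.1, h2.2]
  refine hle.trans_lt ?_
  rw [lintegral_const_mul _ (by fun_prop), lint_far (by linarith) one_pos]
  exact ENNReal.mul_lt_top ENNReal.ofReal_lt_top ENNReal.ofReal_lt_top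

lemma ph_far {s a : ℝ} (hs : 0 < s) (hs1 : s ≤ 1) (ha : 0 < a) (ha1 : a ≤ 1)
    {x y : ℝ} (hxy : x ≤ y) (z : ℝ) : ‖ph s a x z - ph s a y z‖ₑ ≤
      ENNReal.ofReal |uu s a y - uu s a x| * ENNReal.ofReal (|z| ^ (-(1 + 2 * s))) +
      ∫⁻ t in Ioc x y, ‖vv s a (t + z)‖ₑ * ENNReal.ofReal (|z| ^ (-(1 + 2 * s))) := by
  have e : ph s a x z - ph s a y z = ((uu s a x - uu s a y) + (uu s a (y + z) - uu s a (x + z))) *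
      |z| ^ (-(1 + 2 * s)) := by unfold ph; ring
  have hk : ‖|z| ^ (-(1 + 2 * s))‖ₑ = ENNReal.ofReal (|z| ^ (-(1 + 2 * s))) := by
    rw [Real.enorm_eq_ofReal (Real.rpow_nonneg (abs_nonneg z) _)]
  have hm : Measurable (fun t => ‖vv s a (t + z)‖ₑ) :=
    ((vv_meas s a).comp (measurable_add_const z)).enorm
  rw [e, enorm_mul, hk, lintegral_mul_const _ hm, ← add_mul]
  gcongr
  refine (enorm_add_le _ _).trans ?_
  rw [enorm_sub_rev, Real.enorm_eq_ofReal_abs]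
  gcongr
  rw [uu_sub hs hs1 ha ha1, ← intervalIntegral.integral_comp_add_right, intervalIntegral.integral_of_le hxy]
  exact enorm_integral_le_lintegral_enorm _

lemma far_int {s a : ℝ} (hs : 0 < s) (hs1 : s ≤ 1 / 2) (ha : 0 < a) (ha1 : a ≤ 1) (h2 : 2 * s < a) :
    ∃ C : ℝ, 0 ≤ C ∧ ∀ x y δ : ℝ, 0 ≤ x → x ≤ y → y ≤ π / 2 → 0 < δ →
      ∫⁻ z in {z : ℝ | δ < |z|}, ∫⁻ t in Ioc x y, ‖vv s a (t + z)‖ₑ * ENNReal.ofReal (|z| ^ (-(1 + 2 * s)))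
        ≤ ENNReal.ofReal (C * (δ ^ (-(2 * s)) * (uu s a y - uu s a x) + δ ^ (a - 2 * s))) := by
  obtain ⟨C, hC, hin⟩ := inner hs hs1 ha ha1
  have hpos : 0 < a - 2 * s := by linarith
  refine ⟨C * (2 + 10 / (a - 2 * s)), by positivity, ?_⟩
  intro x y δ hx hxy hy hδ
  have hm : Measurable (Function.uncurry fun z t : ℝ =>
      ‖vv s a (t + z)‖ₑ * ENNReal.ofReal (|z| ^ (-(1 + 2 * s)))) := by
    have := vv_meas s a
    unfold Function.uncurry
    fun_prop
  rw [lintegral_lintegral_swap hm.aemeasurable]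
  have hvm := vv_meas s a
  have hD : ∫⁻ t in Ioc x y, ENNReal.ofReal (vv s a t) = ENNReal.ofReal (uu s a y - uu s a x) := by
    rw [uu_sub hs (by linarith) ha ha1, intervalIntegral.integral_of_le hxy,
      ofReal_integral_eq_lintegral_ofReal]
    · exact (intervalIntegrable_iff_integrableOn_Ioc_of_le hxy).1 (vv_int hs (by linarith) ha ha1 x y)
    · filter_upwards [ae_restrict_mem measurableSet_Ioc] with t ht
      have : 0 < Real.sin t := Real.sin_pos_of_pos_of_lt_pi (by linarith [ht.1])
        (by linarith [ht.2, Real.pi_pos])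
      exact (vv_pos hs this).le
  calc _ ≤ ∫⁻ t in Ioc x y, (ENNReal.ofReal (C * 2 * δ ^ (-(2 * s))) * ENNReal.ofReal (vv s a t) +
        ENNReal.ofReal (C * 5) * {t : ℝ | |t| ≤ δ}.indicator
          (fun t => ENNReal.ofReal (|t| ^ (a - 2 * s - 1))) t) := by
        refine setLIntegral_mono' measurableSet_Ioc fun t ht => ?_
        have ht0 : 0 < t := by linarith [ht.1]
        have ht1 : t ≤ π / 2 := ht.2.trans hy
        have hst : 0 < Real.sin t := by linarith [sin_low' ht0.le ht1]
        have hv := vv_pos (a := a) hs hst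
        refine (hin t δ ht0 ht1 hδ).trans ?_
        rw [← ofReal_ind, ← ENNReal.ofReal_mul (by positivity), ← ENNReal.ofReal_mul (by positivity),
          ← ENNReal.ofReal_add (by positivity)
            (mul_nonneg (by positivity) (indicator_nonneg (fun _ _ => by positivity) _))]
        apply ENNReal.ofReal_le_ofReal
        rw [mul_assoc, mul_assoc C, mul_assoc, ← mul_add]
        refine mul_le_mul_of_nonneg_left ?_ hC
        by_cases htd : |t| ≤ δ
        · rw [indicator_of_mem (show t ∈ {t : ℝ | |t| ≤ δ} from htd), abs_of_pos ht0]
          have h1 := (le_abs_self _).trans (vv_le_rpow hs (by linarith) ha ha1 ht0 ht1)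
          have h3 : t ^ (-(2 * s)) * vv s a t ≤ 5 * t ^ (a - 2 * s - 1) := by
            calc _ ≤ t ^ (-(2 * s)) * (5 * t ^ (a - 1)) := by gcongr
              _ = 5 * (t ^ (-(2 * s)) * t ^ (a - 1)) := by ring
              _ = _ := by rw [← Real.rpow_add ht0]; congr 2; ring
          have : 0 < δ ^ (-(2 * s)) * vv s a t := by positivity
          linarith
        · rw [indicator_of_notMem (show t ∉ {t : ℝ | |t| ≤ δ} from htd)]
          rw [abs_of_pos ht0] at htd
          have h3 : t ^ (-(2 * s)) ≤ δ ^ (-(2 * s)) :=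
            Real.rpow_le_rpow_of_nonpos hδ (not_le.1 htd).le (by linarith)
          nlinarith
    _ = ENNReal.ofReal (C * 2 * δ ^ (-(2 * s))) * ENNReal.ofReal (uu s a y - uu s a x) +
        ENNReal.ofReal (C * 5) * ∫⁻ t in Ioc x y, {t : ℝ | |t| ≤ δ}.indicator
          (fun t => ENNReal.ofReal (|t| ^ (a - 2 * s - 1))) t := by
        have m2 : Measurable ({t : ℝ | |t| ≤ δ}.indicator
          (fun t => ENNReal.ofReal (|t| ^ (a - 2 * s - 1)))) :=
          Measurable.indicator (by fun_prop) (mS_le δ)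
        rw [lintegral_add_left (by fun_prop), lintegral_const_mul _ (by fun_prop), hD,
          lintegral_const_mul _ m2]
    _ ≤ ENNReal.ofReal (C * 2 * δ ^ (-(2 * s))) * ENNReal.ofReal (uu s a y - uu s a x) +
        ENNReal.ofReal (C * 5) * ENNReal.ofReal (2 * (δ ^ (a - 2 * s) / (a - 2 * s))) := by
        gcongr
        rw [← lint_near hpos hδ.le, ← lintegral_indicator (mS_le δ)]
        exact lintegral_mono' Measure.restrict_le_self le_rfl
    _ ≤ _ := by
        have hD0 : 0 ≤ uu s a y - uu s a x := by
          linarith [uu_mono hs (by linarith) ha ha1 hx hxy (by linarith [Real.pi_pos])]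
        rw [← ENNReal.ofReal_mul (by positivity), ← ENNReal.ofReal_mul (by positivity),
          ← ENNReal.ofReal_add (by positivity) (by positivity)]
        apply ENNReal.ofReal_le_ofReal
        have n1 : 0 ≤ C * 2 * δ ^ (a - 2 * s) := by positivity
        have n2 : 0 ≤ C * (10 / (a - 2 * s)) * (δ ^ (-(2 * s)) * (uu s a y - uu s a x)) := by positivity
        have e : C * 5 * (2 * (δ ^ (a - 2 * s) / (a - 2 * s))) = C * (10 / (a - 2 * s)) * δ ^ (a - 2 * s) := by
          ring
        rw [e]
        nlinarith

lemma main0 {s a β : ℝ} (hs : 0 < s) (hs1 : s ≤ 1 / 2) (ha : 0 < a) (ha1 : a ≤ 1) (h2 : 2 * s < a)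
    (hβ : β = (a - 2 * s) / a) :
    ∃ C : ℝ, 0 ≤ C ∧ ∀ x y : ℝ, 0 ≤ x → x ≤ y → y ≤ π / 2 →
      |ww s a x - ww s a y| ≤ C * (uu s a y - uu s a x) ^ β := by
  obtain ⟨C, hC, hfar⟩ := far_int hs hs1 ha ha1 h2
  have hpos : 0 < a - 2 * s := by linarith
  have hs1' : s ≤ 1 := by linarith
  have hβ0 : 0 < β := by rw [hβ]; positivity
  refine ⟨2 * (20 / a / (a - 2 * s)) + 1 / s + 2 * C, by positivity, ?_⟩
  intro x y hx hxy hy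
  rcases hxy.eq_or_lt with rfl | hlt
  · simp [Real.zero_rpow hβ0.ne']
  have hD : 0 < uu s a y - uu s a x := by
    linarith [uu_strict hs hs1' ha ha1 hx hlt (by linarith [Real.pi_pos])]
  set D := uu s a y - uu s a x with hDdef
  set δ := D ^ (1 / a) with hδdef
  have hδ : 0 < δ := by positivity
  have hδ1 : δ ^ (a - 2 * s) = D ^ β := by
    rw [hδdef, ← Real.rpow_mul hD.le, hβ]; congr 1; ring
  have hδ2 : δ ^ (-(2 * s)) * D = D ^ β := by
    rw [hδdef, ← Real.rpow_mul hD.le]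
    nth_rewrite 2 [← Real.rpow_one D]
    rw [← Real.rpow_add hD, hβ]; congr 1; field_simp; ring
  have hix := ph_integrable hs hs1' ha ha1 h2 x
  have hiy := ph_integrable hs hs1' ha ha1 h2 y
  have key : ‖ww s a x - ww s a y‖ₑ ≤ ENNReal.ofReal ((2 * (20 / a / (a - 2 * s)) + 1 / s + 2 * C) * D ^ β) := by
    unfold ww
    rw [← integral_sub hix hiy]
    refine (enorm_integral_le_lintegral_enorm _).trans ?_
    rw [← lintegral_add_compl _ (mS_le δ), S_compl]
    have near : ∫⁻ z in {z : ℝ | |z| ≤ δ}, ‖ph s a x z - ph s a y z‖ₑ ≤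
        ENNReal.ofReal (10 / a * (2 * (δ ^ (a - 2 * s) / (a - 2 * s)))) +
        ENNReal.ofReal (10 / a * (2 * (δ ^ (a - 2 * s) / (a - 2 * s)))) := by
      calc _ ≤ ∫⁻ z in {z : ℝ | |z| ≤ δ}, (‖ph s a x z‖ₑ + ‖ph s a y z‖ₑ) :=
            lintegral_mono fun z => enorm_sub_le
        _ = _ := lintegral_add_left (ph_meas hs hs1' ha ha1 x).enorm _
        _ ≤ _ := add_le_add (ph_near hs hs1' ha ha1 h2 x δ hδ.le) (ph_near hs hs1' ha ha1 h2 y δ hδ.le)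
    have far : ∫⁻ z in {z : ℝ | δ < |z|}, ‖ph s a x z - ph s a y z‖ₑ ≤
        ENNReal.ofReal D * ENNReal.ofReal (2 * (δ ^ (-(2 * s)) / (2 * s))) +
        ENNReal.ofReal (C * (δ ^ (-(2 * s)) * D + δ ^ (a - 2 * s))) := by
      calc _ ≤ ∫⁻ z in {z : ℝ | δ < |z|}, (ENNReal.ofReal D * ENNReal.ofReal (|z| ^ (-(1 + 2 * s))) +
            ∫⁻ t in Ioc x y, ‖vv s a (t + z)‖ₑ * ENNReal.ofReal (|z| ^ (-(1 + 2 * s)))) := by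
            refine lintegral_mono fun z => ?_
            have := ph_far hs hs1' ha ha1 hxy z
            rwa [← hDdef, abs_of_pos hD] at this
        _ = _ := lintegral_add_left (by fun_prop) _
        _ ≤ _ := by
            rw [lintegral_const_mul _ (by fun_prop), lint_far (by linarith) hδ]
            exact add_le_add le_rfl (hfar x y δ hx hxy hy hδ)
    refine (add_le_add near far).trans ?_
    rw [← ENNReal.ofReal_add (by positivity) (by positivity), ← ENNReal.ofReal_mul (by positivity),
      ← ENNReal.ofReal_add (by positivity) (by positivity),
      ← ENNReal.ofReal_add (by positivity) (by positivity)]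
    apply ENNReal.ofReal_le_ofReal
    have e : D * (2 * (δ ^ (-(2 * s)) / (2 * s))) = 1 / s * (δ ^ (-(2 * s)) * D) := by field_simp
    rw [e, hδ2, hδ1]
    apply le_of_eq
    ring
  rw [Real.enorm_eq_ofReal_abs] at key
  exact (ENNReal.ofReal_le_ofReal_iff (by positivity)).1 key

lemma ww_neg (s a x : ℝ) : ww s a (-x) = ww s a x := by
  unfold ww
  rw [← integral_neg_eq_self]
  congr 1; funext z
  unfold ph
  rw [show -x + -z = -(x + z) by ring, uu_neg, uu_neg, abs_neg]

lemma ww_add_pi {s a : ℝ} (hs : 0 < s) (hs1 : s ≤ 1) (ha : 0 < a) (ha1 : a ≤ 1) (x : ℝ) :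
    ww s a (x + π) = - ww s a x := by
  unfold ww
  rw [← integral_neg]
  congr 1; funext z
  unfold ph
  rw [show x + π + z = x + z + π by ring, uu_add_pi hs hs1 ha ha1, uu_add_pi hs hs1 ha ha1]
  ring

lemma ww_pi_sub {s a : ℝ} (hs : 0 < s) (hs1 : s ≤ 1) (ha : 0 < a) (ha1 : a ≤ 1) (x : ℝ) :
    ww s a (π - x) = - ww s a x := by
  rw [show π - x = -x + π by ring, ww_add_pi hs hs1 ha ha1, ww_neg]

lemma ww_periodic {s a : ℝ} (hs : 0 < s) (hs1 : s ≤ 1) (ha : 0 < a) (ha1 : a ≤ 1) :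
    Function.Periodic (ww s a) (2 * π) := by
  intro x
  rw [show x + 2 * π = x + π + π by ring, ww_add_pi hs hs1 ha ha1, ww_add_pi hs hs1 ha ha1, neg_neg]

lemma main1 {s a β : ℝ} (hs : 0 < s) (hs1 : s ≤ 1 / 2) (ha : 0 < a) (ha1 : a ≤ 1) (h2 : 2 * s < a)
    (hβ : β = (a - 2 * s) / a) :
    ∃ C : ℝ, 0 ≤ C ∧ ∀ x y : ℝ, |ww s a x - ww s a y| ≤ C * |uu s a x - uu s a y| ^ β := by
  obtain ⟨C, hC, h0⟩ := main0 hs hs1 ha ha1 h2 hβ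
  have hs1' : s ≤ 1 := by linarith
  have hpos : 0 < a - 2 * s := by linarith
  have hβ0 : 0 < β := by rw [hβ]; positivity
  have hpi := Real.pi_pos
  have key : ∀ {x y : ℝ}, π / 2 ≤ x → x ≤ y → y ≤ π →
      |ww s a x - ww s a y| ≤ C * (uu s a y - uu s a x) ^ β := by
    intro x y hx hxy hy
    have := h0 (π - y) (π - x) (by linarith) (by linarith) (by linarith)
    rw [uu_pi_sub hs hs1' ha ha1, uu_pi_sub hs hs1' ha ha1, ww_pi_sub hs hs1' ha ha1,
      ww_pi_sub hs hs1' ha ha1] at this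
    rw [show -ww s a y - -ww s a x = ww s a x - ww s a y by ring,
      show uu s a π - uu s a x - (uu s a π - uu s a y) = uu s a y - uu s a x by ring] at this
    exact this
  have key2 : ∀ {x y : ℝ}, 0 ≤ x → x ≤ y → y ≤ π →
      |ww s a x - ww s a y| ≤ 2 * C * (uu s a y - uu s a x) ^ β := by
    intro x y hx hxy hy
    have hm := uu_mono hs hs1' ha ha1 hx hxy hy
    have hle : C * (uu s a y - uu s a x) ^ β ≤ 2 * C * (uu s a y - uu s a x) ^ β := by
      have : 0 ≤ (uu s a y - uu s a x) ^ β := Real.rpow_nonneg (by linarith) _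
      nlinarith
    rcases le_total y (π / 2) with h1 | h1
    · exact (h0 x y hx hxy h1).trans hle
    rcases le_total (π / 2) x with h3 | h3
    · exact (key h3 hxy hy).trans hle
    have A := h0 x (π / 2) hx h3 le_rfl
    have B := key le_rfl h1 hy
    have m1 := uu_mono hs hs1' ha ha1 hx h3 (by linarith)
    have m2 := uu_mono hs hs1' ha ha1 (by positivity) h1 hy
    have A' : C * (uu s a (π / 2) - uu s a x) ^ β ≤ C * (uu s a y - uu s a x) ^ β := by
      have : 0 ≤ uu s a (π / 2) - uu s a x := by linarith
      gcongr
    have B' : C * (uu s a y - uu s a (π / 2)) ^ β ≤ C * (uu s a y - uu s a x) ^ β := by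
      have : 0 ≤ uu s a y - uu s a (π / 2) := by linarith
      gcongr
    have := abs_sub_le (ww s a x) (ww s a (π / 2)) (ww s a y)
    linarith
  refine ⟨2 * C, by positivity, fun x y => ?_⟩
  rw [← fold_eq (uu_periodic hs hs1' ha ha1) (uu_neg s a) x, ← fold_eq (uu_periodic hs hs1' ha ha1) (uu_neg s a) y,
    ← fold_eq (ww_periodic hs hs1' ha ha1) (ww_neg s a) x, ← fold_eq (ww_periodic hs hs1' ha ha1) (ww_neg s a) y]
  rcases le_total (fold x) (fold y) with h | h
  · rw [abs_sub_comm (uu s a _), abs_of_nonneg (sub_nonneg.2 (uu_mono hs hs1' ha ha1 (fold_nonneg _) h (fold_le _)))]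
    exact key2 (fold_nonneg _) h (fold_le _)
  · rw [abs_sub_comm (ww s a _), abs_of_nonneg (sub_nonneg.2 (uu_mono hs hs1' ha ha1 (fold_nonneg _) h (fold_le _)))]
    exact key2 (fold_nonneg _) h (fold_le _)


lemma fl_at {s a : ℝ} (hs : 0 < s) (hs1 : s ≤ 1) (ha : 0 < a) (ha1 : a ≤ 1) (h2 : 2 * s < a)
    (x : ℝ) : HasFracLapAt s (uu s a) x (fracLapCoef s * ww s a x) := by
  have e : (fun y : ℝ => (uu s a x - uu s a y) / |x - y| ^ (1 + 2 * s)) =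
      fun y => ph s a x (y - x) := by
    funext y
    unfold ph
    rw [Real.rpow_neg (abs_nonneg _), abs_sub_comm y x, add_sub_cancel, div_eq_mul_inv]
  have hi : Integrable (fun y => ph s a x (y - x)) := (ph_integrable hs hs1 ha ha1 h2 x).comp_sub_right x
  have hmS : ∀ ε : ℝ, MeasurableSet {y : ℝ | ε < |y - x|} := fun ε =>
    measurableSet_lt measurable_const (by fun_prop)
  unfold HasFracLapAt
  rw [e]
  refine ⟨fun ε _ => hi.integrableOn, Tendsto.const_mul _ ?_⟩
  have hw : ww s a x = ∫ y, ph s a x (y - x) := by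
    rw [integral_sub_right_eq_self]; rfl
  rw [hw]
  simp_rw [← fun ε => integral_indicator (μ := volume) (f := fun y => ph s a x (y - x)) (hmS ε)]
  refine tendsto_integral_filter_of_dominated_convergence (fun y => ‖ph s a x (y - x)‖) ?_ ?_ hi.norm ?_
  · exact Eventually.of_forall fun ε => hi.aestronglyMeasurable.indicator (hmS ε)
  · exact Eventually.of_forall fun ε => Eventually.of_forall fun y => norm_indicator_le_norm_self _ _
  · refine Eventually.of_forall fun y => ?_
    by_cases hy : y = x
    · subst hy
      have : ph s a y (y - y) = 0 := by simp [ph]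
      simp only [indicator_apply, this, ite_self]
      exact tendsto_const_nhds
    · have hp : 0 < |y - x| := abs_pos.2 (sub_ne_zero.2 hy)
      refine tendsto_const_nhds.congr' ?_
      have : Iio |y - x| ∈ nhdsWithin (0:ℝ) (Ioi 0) := mem_nhdsWithin_of_mem_nhds (Iio_mem_nhds hp)
      filter_upwards [this] with ε hε
      rw [indicator_of_mem (show y ∈ {y : ℝ | ε < |y - x|} from hε)]

lemma uu_surj {s a : ℝ} (hs : 0 < s) (hs1 : s ≤ 1) (ha : 0 < a) (ha1 : a ≤ 1) (t : ℝ) :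
    ∃ x, uu s a x = max 0 (min t (uu s a π)) := by
  have hU := uu_mem hs hs1 ha ha1 π
  have := intermediate_value_Icc Real.pi_pos.le (uu_cont hs hs1 ha ha1).continuousOn
  rw [uu_zero] at this
  obtain ⟨x, -, hx⟩ := this (show max 0 (min t (uu s a π)) ∈ Icc 0 (uu s a π) from
    ⟨le_max_left _ _, max_le hU.1 (min_le_right _ _)⟩)
  exact ⟨x, hx⟩

lemma holder_of {C γ : ℝ} (hC : 0 ≤ C) (hγ : 0 ≤ γ) {S : Set ℝ} {f : ℝ → ℝ}
    (h : ∀ x ∈ S, ∀ y ∈ S, |f x - f y| ≤ C * |x - y| ^ γ) : HolderOnWith C.toNNReal γ.toNNReal f S := by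
  intro x hx y hy
  rw [edist_dist, edist_dist, Real.dist_eq, Real.dist_eq, Real.coe_toNNReal _ hγ,
    ENNReal.ofReal_rpow_of_nonneg (abs_nonneg _) hγ]
  change _ ≤ ENNReal.ofReal C * _
  rw [← ENNReal.ofReal_mul hC]
  exact ENNReal.ofReal_le_ofReal (h x hx y hy)

lemma of_holder {C : NNReal} {γ : ℝ} (hγ : 0 ≤ γ) {S : Set ℝ} {f : ℝ → ℝ}
    (h : HolderOnWith C γ.toNNReal f S) {x y : ℝ} (hx : x ∈ S) (hy : y ∈ S) :
    |f x - f y| ≤ C * |x - y| ^ γ := by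
  have := h.dist_le hx hy
  rwa [Real.dist_eq, Real.dist_eq, Real.coe_toNNReal _ hγ] at this

lemma mem0 {C M γ : ℝ} (hC : 0 ≤ C) (hγ : 0 < γ) (hγ1 : γ < 1) {f : ℝ → ℝ}
    (h : ∀ x y, |f x - f y| ≤ C * |x - y| ^ γ) (hM : ∀ x, |f x| ≤ M) : MemCalpha γ univ f := by
  have hf : ⌊γ⌋₊ = 0 := Nat.floor_eq_zero.2 hγ1
  have hh : HolderOnWith C.toNNReal γ.toNNReal f univ := holder_of hC hγ.le fun x _ y _ => h x y
  unfold MemCalpha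
  rw [hf]
  refine ⟨?_, ?_, C.toNNReal, ?_⟩
  · rw [Nat.cast_zero, contDiffOn_zero]
    exact hh.continuousOn (by simpa using hγ)
  · intro k hk
    obtain rfl : k = 0 := by omega
    exact ⟨M, fun x _ => by simpa using hM x⟩
  · rw [iteratedDerivWithin_zero]; simpa using hh

lemma f_exists {s a β : ℝ} (hs : 0 < s) (hs1 : s ≤ 1 / 2) (ha : 0 < a) (ha1 : a ≤ 1) (h2 : 2 * s < a)
    (hβ : β = (a - 2 * s) / a) (hβ0 : 0 < β) (hβ1 : β < 1) :
    ∃ f : ℝ → ℝ, MemCalpha β univ f ∧ ∀ x, f (uu s a x) = fracLapCoef s * ww s a x := by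
  have hs1' : s ≤ 1 := by linarith
  obtain ⟨C, hC, hm⟩ := main1 hs hs1 ha ha1 h2 hβ
  choose X hX using uu_surj hs hs1' ha ha1
  have hd : ∀ t t', |uu s a (X t) - uu s a (X t')| ≤ |t - t'| := by
    intro t t'
    rw [hX, hX]
    refine (abs_max_sub_max_le_max _ _ _ _).trans ?_
    rw [sub_self, abs_zero]
    refine max_le (abs_nonneg _) ((abs_min_sub_min_le_max _ _ _ _).trans ?_)
    rw [sub_self, abs_zero]
    exact max_le le_rfl (abs_nonneg _)
  refine ⟨fun t => fracLapCoef s * ww s a (X t), ?_, ?_⟩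
  · refine mem0 (C := |fracLapCoef s| * C)
      (M := |fracLapCoef s| * (|ww s a 0| + C * (uu s a π) ^ β)) (by positivity) hβ0 hβ1 ?_ ?_
    · intro t t'
      rw [← mul_sub, abs_mul, mul_assoc]
      gcongr
      refine (hm _ _).trans (mul_le_mul_of_nonneg_left ?_ hC)
      exact Real.rpow_le_rpow (abs_nonneg _) (hd t t') hβ0.le
    · intro t
      rw [abs_mul]
      gcongr
      have h1 := hm (X t) 0
      have h3 : |uu s a (X t) - uu s a 0| ≤ uu s a π := by
        have := uu_mem hs hs1' ha ha1 (X t)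
        rw [uu_zero, sub_zero, abs_of_nonneg this.1]; exact this.2
      have h4 : C * |uu s a (X t) - uu s a 0| ^ β ≤ C * (uu s a π) ^ β := by gcongr
      have h5 := abs_sub_abs_le_abs_sub (ww s a (X t)) (ww s a 0)
      linarith
  · intro x
    have hx := uu_mem hs hs1' ha ha1 x
    have e : uu s a (X (uu s a x)) = uu s a x := by
      rw [hX, min_eq_left hx.2, max_eq_right hx.1]
    have h1 := hm (X (uu s a x)) x
    rw [e, sub_self, abs_zero, Real.zero_rpow hβ0.ne', mul_zero] at h1
    have : ww s a (X (uu s a x)) - ww s a x = 0 := abs_nonpos_iff.1 h1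
    simp only
    rw [sub_eq_zero.1 this]

/-- lower bound for the derivative near zero -/
lemma vv_low {s a η : ℝ} (hs : 0 < s) (ha1 : a ≤ 1) (hη : 0 < η) :
    ∃ c : ℝ, 0 < c ∧ ∀ x t : ℝ, 0 < x → x ≤ 1 → x / 2 ≤ t → t ≤ x →
      c * x ^ (a - 1 + η) ≤ vv s a t := by
  refine ⟨(1 / s + 1 / η)⁻¹ * (1 / 10) ^ η, by positivity, ?_⟩
  intro x t hx hx1 ht1 ht2
  have hpi := Real.pi_gt_three
  have ht : 0 < t := by linarith
  have hl := sin_low' ht.le (by linarith)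
  have h0 : 0 < Real.sin t := by linarith
  have hle : Real.sin t ≤ x := (Real.sin_le ht.le).trans ht2
  rw [vv_eq hs h0]
  refine le_trans ?_ (mm_low' hs hη h0 (Real.sin_le_one t))
  rw [mul_assoc]
  refine mul_le_mul_of_nonneg_left ?_ (by positivity)
  have h1 : x ^ (a - 1) ≤ Real.sin t ^ (a - 1) := Real.rpow_le_rpow_of_nonpos h0 hle (by linarith)
  have h2 : (1 / 10 * x) ^ η ≤ Real.sin t ^ η := Real.rpow_le_rpow (by positivity) (by linarith) hη.le
  calc (1 / 10) ^ η * x ^ (a - 1 + η) = x ^ (a - 1) * (1 / 10 * x) ^ η := by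
        rw [Real.mul_rpow (by norm_num) hx.le, Real.rpow_add hx]; ring
    _ ≤ _ := by gcongr

lemma uu_low {s a η : ℝ} (hs : 0 < s) (hs1 : s ≤ 1) (ha : 0 < a) (ha1 : a ≤ 1) (hη : 0 < η) :
    ∃ c : ℝ, 0 < c ∧ ∀ x : ℝ, 0 < x → x ≤ 1 → c * x ^ (a + η) ≤ uu s a x := by
  obtain ⟨c, hc, h⟩ := vv_low (a := a) hs ha1 hη
  refine ⟨c / 2, by positivity, fun x hx hx1 => ?_⟩
  have h1 := uu_sub hs hs1 ha ha1 (x / 2) x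
  have h2 := (uu_mem hs hs1 ha ha1 (x / 2)).1
  have h3 : ∫ t in (x / 2)..x, c * x ^ (a - 1 + η) ≤ ∫ t in (x / 2)..x, vv s a t :=
    intervalIntegral.integral_mono_on (by linarith) intervalIntegrable_const
      (vv_int hs hs1 ha ha1 _ _) fun t ht => h x t hx hx1 ht.1 ht.2
  rw [intervalIntegral.integral_const, smul_eq_mul] at h3
  have e : (x - x / 2) * (c * x ^ (a - 1 + η)) = c / 2 * x ^ (a + η) := by
    rw [show a + η = (a - 1 + η) + 1 by ring, Real.rpow_add hx (a - 1 + η), Real.rpow_one]; ring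
  linarith

/-- two powers cannot be compared in the wrong direction -/
lemma pow_contra {c C p q ρ : ℝ} (hc : 0 < c) (hpq : p < q) (hρ : 0 < ρ)
    (h : ∀ x, 0 < x → x ≤ 1 → x ≤ ρ → c * x ^ p ≤ C * x ^ q) : False := by
  have h1 : Tendsto (fun x : ℝ => C * x ^ (q - p)) (nhdsWithin 0 (Ioi 0)) (nhds (C * 0)) := by
    refine Tendsto.const_mul _ ?_
    have : ContinuousAt (fun x : ℝ => x ^ (q - p)) 0 :=
      Real.continuousAt_rpow_const _ _ (Or.inr (by linarith))
    have h2 := this.tendsto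
    rw [Real.zero_rpow (by linarith)] at h2
    exact h2.mono_left nhdsWithin_le_nhds
  rw [mul_zero] at h1
  have h2 := h1.eventually_lt_const hc
  have h3 : Ioo 0 (min 1 ρ) ∈ nhdsWithin (0:ℝ) (Ioi 0) := Ioo_mem_nhdsGT (by positivity)
  obtain ⟨x, hx1, hx2⟩ := (h2.and h3).exists
  have hx0 := hx2.1
  have := h x hx0 (hx2.2.le.trans (min_le_left _ _)) (hx2.2.le.trans (min_le_right _ _))
  have hp := Real.rpow_pos_of_pos hx0 p
  have e : C * x ^ q = C * x ^ (q - p) * x ^ p := by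
    rw [mul_assoc, ← Real.rpow_add hx0]; congr 2; ring
  rw [e] at this
  have := le_of_mul_le_mul_right this hp
  linarith

lemma vv_cont {s : ℝ} (hs : 0 < s) (hs1 : s ≤ 1) : Continuous (vv s 1) := by
  rw [continuous_iff_continuousAt]
  intro x
  by_cases hx : Real.sin x = 0
  · have hl : Tendsto (fun x => 1 / s - Real.log (Real.sin x))
        (nhdsWithin x {x | Real.sin x ≠ 0}) atTop := by
      have h1 : Tendsto Real.sin (nhdsWithin x {x | Real.sin x ≠ 0}) (nhdsWithin 0 {0}ᶜ) := by
        refine tendsto_nhdsWithin_iff.2 ⟨?_, ?_⟩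
        · have := Real.continuous_sin.tendsto x
          rw [hx] at this
          exact this.mono_left nhdsWithin_le_nhds
        · filter_upwards [self_mem_nhdsWithin] with y hy using hy
      have h2 := Real.tendsto_log_nhdsNE_zero.comp h1
      have h3 := tendsto_neg_atBot_atTop.comp h2
      have h4 := tendsto_atTop_add_const_left _ (1 / s) h3
      exact h4
    have hb : Tendsto (fun x => (1 / s - Real.log (Real.sin x))⁻¹)
        (nhdsWithin x {x | Real.sin x ≠ 0}) (nhds 0) := tendsto_inv_atTop_zero.comp hl
    have h0 : vv s 1 x = 0 := vv_zero hx
    rw [ContinuousAt, h0, tendsto_zero_iff_abs_tendsto_zero]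
    rw [Metric.tendsto_nhds]
    intro ε hε
    have hb' := (Metric.tendsto_nhds.1 hb ε hε)
    rw [eventually_nhdsWithin_iff] at hb'
    filter_upwards [hb'] with y hy
    by_cases hy0 : Real.sin y = 0
    · have : vv s 1 y = 0 := vv_zero hy0
      simp [this, hε]
    · have h := hy hy0
      rw [Real.dist_eq, sub_zero] at h ⊢
      rw [Function.comp, abs_abs]
      have e : |vv s 1 y| = |(1 / s - Real.log (Real.sin y))⁻¹| := by
        have hp : 0 < |Real.sin y| := abs_pos.2 hy0
        rw [vv, abs_div, abs_mul, abs_of_nonneg (Real.rpow_nonneg (abs_nonneg _) _),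
          show (1:ℝ) - 2 = -1 by norm_num, Real.rpow_neg_one, mul_inv_cancel₀ hp.ne', abs_inv, one_div]
      rw [e]; exact h
  · have hd : 1 / s - Real.log (Real.sin x) ≠ 0 := by
      have h1 : Real.log (Real.sin x) ≤ 0 := by
        rw [← Real.log_abs]
        exact Real.log_nonpos (abs_nonneg _) (Real.abs_sin_le_one x)
      have h2 : 0 < 1 / s := by positivity
      linarith
    unfold vv
    refine ContinuousAt.div ?_ ?_ hd
    · refine Real.continuous_sin.continuousAt.mul ?_
      exact (Real.continuous_sin.abs.continuousAt).rpow_const (Or.inl (abs_ne_zero.2 hx))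
    · exact continuousAt_const.sub (Real.continuous_sin.continuousAt.log hx)

lemma uu_deriv {s : ℝ} (hs : 0 < s) (hs1 : s ≤ 1) (x : ℝ) : HasDerivAt (uu s 1) (vv s 1 x) x :=
  intervalIntegral.integral_hasDerivAt_right (vv_int hs hs1 one_pos le_rfl 0 x)
    ((vv_cont hs hs1).stronglyMeasurableAtFilter _ _) (vv_cont hs hs1).continuousAt

lemma vv_bd1 {s : ℝ} (hs : 0 < s) (hs1 : s ≤ 1) (x : ℝ) : |vv s 1 x| ≤ 1 := by
  have := vv_le (s := s) (a := 1) (x := x) hs hs1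
  simpa using this

lemma uu_mem1 {s a : ℝ} (hs : 0 < s) (hs1 : s ≤ 1) (ha : 0 < a) (ha1 : a ≤ 1) :
    MemCalpha a univ (uu s a) := by
  have hM : ∀ x, |uu s a x| ≤ uu s a π := fun x => by
    have := uu_mem hs hs1 ha ha1 x
    rw [abs_of_nonneg this.1]; exact this.2
  rcases ha1.lt_or_eq with h | h
  · exact mem0 (C := 10 / a) (by positivity) ha h (uu_hol hs hs1 ha ha1) hM
  · subst h
    have hd : deriv (uu s 1) = vv s 1 := funext fun x => (uu_deriv hs hs1 x).deriv
    have hf : ⌊(1:ℝ)⌋₊ = 1 := Nat.floor_one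
    have hi : iteratedDerivWithin 1 (uu s 1) univ = vv s 1 := by
      rw [iteratedDerivWithin_univ, iteratedDeriv_one, hd]
    unfold MemCalpha
    rw [hf, hi]
    refine ⟨?_, ?_, (2:ℝ).toNNReal, ?_⟩
    · rw [Nat.cast_one, contDiffOn_univ, contDiff_one_iff_deriv, hd]
      exact ⟨fun x => (uu_deriv hs hs1 x).differentiableAt, vv_cont hs hs1⟩
    · intro k hk
      obtain rfl | rfl : k = 0 ∨ k = 1 := by omega
      · exact ⟨_, fun x _ => by simpa using hM x⟩
      · exact ⟨1, fun x _ => by rw [hi]; exact vv_bd1 hs hs1 x⟩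
    · refine holder_of (by norm_num) (by simp) fun x _ y _ => ?_
      have h1 := vv_bd1 hs hs1 x
      have h2 := vv_bd1 hs hs1 y
      have h3 := abs_sub (vv s 1 x) (vv s 1 y)
      simp only [Nat.cast_one, sub_self, Real.rpow_zero]
      linarith

lemma lip_of {f : ℝ → ℝ} {ρ C : ℝ} (hρ : 0 < ρ) (hf : DifferentiableOn ℝ f (Icc (-ρ) ρ))
    (hC : ∀ x ∈ Icc (-ρ) ρ, |derivWithin f (Icc (-ρ) ρ) x| ≤ C) {x : ℝ} (hx : 0 < x) (hx1 : x ≤ ρ) :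
    |f x - f 0| ≤ C * x := by
  have := (convex_Icc (-ρ) ρ).norm_image_sub_le_of_norm_derivWithin_le hf hC
    (show (0:ℝ) ∈ Icc (-ρ) ρ from ⟨by linarith, hρ.le⟩) (show x ∈ Icc (-ρ) ρ from ⟨by linarith, hx1⟩)
  rwa [sub_zero, Real.norm_eq_abs, Real.norm_eq_abs, abs_of_pos hx] at this

lemma not_mem {s a : ℝ} (hs : 0 < s) (hs1 : s ≤ 1) (ha : 0 < a) (ha1 : a ≤ 1) {ε ρ : ℝ}
    (hε : 0 < ε) (hρ : 0 < ρ) : ¬ MemCalpha (a + ε) (Icc (-ρ) ρ) (uu s a) := by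
  rintro ⟨h1, h2, C, h3⟩
  have hU : UniqueDiffOn ℝ (Icc (-ρ) ρ) := uniqueDiffOn_Icc (by linarith)
  have h0m : (0:ℝ) ∈ Icc (-ρ) ρ := ⟨by linarith, hρ.le⟩
  have hfl : ((⌊a + ε⌋₊ : ℕ) : ℝ) ≤ a + ε := Nat.floor_le (by positivity)
  have hex : 0 ≤ a + ε - (⌊a + ε⌋₊ : ℝ) := by linarith
  -- contradiction from a power bound on the function
  have fin0 : ∀ (K γ : ℝ), a < γ → (∀ x, 0 < x → x ≤ ρ → |uu s a x - uu s a 0| ≤ K * x ^ γ) → False := by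
    intro K γ hγ hK
    obtain ⟨c, hc, hl⟩ := uu_low (η := (γ - a) / 2) hs hs1 ha ha1 (by linarith)
    refine pow_contra (p := a + (γ - a) / 2) (q := γ) (C := K) hc (by linarith) hρ fun x hx hx1 hx2 => ?_
    have := hK x hx hx2
    rw [uu_zero, sub_zero] at this
    exact (hl x hx hx1).trans ((le_abs_self _).trans this)
  rcases Nat.eq_zero_or_pos ⌊a + ε⌋₊ with hn | hn
  · refine fin0 C (a + ε) (by linarith) fun x hx hx1 => ?_
    have := of_holder hex h3 (show x ∈ Icc (-ρ) ρ from ⟨by linarith, hx1⟩) h0m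
    rw [hn, iteratedDerivWithin_zero, sub_zero, abs_of_pos hx, Nat.cast_zero, sub_zero] at this
    exact this
  rcases ha1.lt_or_eq with ha1' | rfl
  · obtain ⟨K, hK⟩ := h2 1 hn
    refine fin0 K 1 ha1' fun x hx hx1 => ?_
    rw [Real.rpow_one]
    refine lip_of hρ (h1.differentiableOn (by exact_mod_cast (Nat.one_le_iff_ne_zero.1 hn))) ?_ hx hx1
    intro y hy
    rw [← iteratedDerivWithin_one]
    exact hK y hy
  · have hdw : ∀ x ∈ Icc (-ρ) ρ, derivWithin (uu s 1) (Icc (-ρ) ρ) x = vv s 1 x := fun x hx =>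
      (uu_deriv hs hs1 x).hasDerivWithinAt.derivWithin (hU x hx)
    have fin1 : ∀ (K γ : ℝ), 0 < γ → (∀ x, 0 < x → x ≤ ρ → |vv s 1 x - vv s 1 0| ≤ K * x ^ γ) → False := by
      intro K γ hγ hK
      obtain ⟨c, hc, hl⟩ := vv_low (s := s) (a := 1) (η := γ / 2) hs le_rfl (by linarith)
      refine pow_contra (p := 1 - 1 + γ / 2) (q := γ) (C := K) hc (by linarith) hρ fun x hx hx1 hx2 => ?_
      have := hK x hx hx2
      rw [vv_zero (x := 0) Real.sin_zero, sub_zero] at this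
      exact (hl x x hx hx1 (by linarith) le_rfl).trans ((le_abs_self _).trans this)
    rcases Nat.lt_or_ge 1 ⌊1 + ε⌋₊ with hn2 | hn2
    · obtain ⟨K, hK⟩ := h2 2 hn2
      refine fin1 K 1 one_pos fun x hx hx1 => ?_
      rw [Real.rpow_one, ← hdw x ⟨by linarith, hx1⟩, ← hdw 0 h0m]
      have hD : DifferentiableOn ℝ (derivWithin (uu s 1) (Icc (-ρ) ρ)) (Icc (-ρ) ρ) := by
        have := h1.differentiableOn_iteratedDerivWithin (m := 1) (by exact_mod_cast hn2) hU
        rwa [iteratedDerivWithin_one] at this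
      refine lip_of hρ hD ?_ hx hx1
      intro y hy
      have := hK y hy
      rwa [iteratedDerivWithin_succ, iteratedDerivWithin_one] at this
    · have hn1 : ⌊1 + ε⌋₊ = 1 := by omega
      refine fin1 C ε hε fun x hx hx1 => ?_
      have := of_holder hex h3 (show x ∈ Icc (-ρ) ρ from ⟨by linarith, hx1⟩) h0m
      rw [hn1, iteratedDerivWithin_one, hdw x ⟨by linarith, hx1⟩, hdw 0 h0m,
        sub_zero, abs_of_pos hx, Nat.cast_one, add_sub_cancel_left] at this
      exact this

end FL

theorem stmt11 (s β : ℝ) (hβ0 : 0 < β) (hβ1 : β < 1) (hs0 : 0 < s) (h : 2 * s ≤ 1 - β) :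
    ∃ u f : ℝ → ℝ,
      (∃ T : ℝ, 0 < T ∧ Function.Periodic u T) ∧
      MemCalpha (2 * s / (1 - β)) Set.univ u ∧
      MemCalpha β Set.univ f ∧
      (∀ x : ℝ, HasFracLapAt s u x (f (u x))) ∧
      (∀ ε ρ : ℝ, 0 < ε → 0 < ρ →
        ¬ MemCalpha (2 * s / (1 - β) + ε) (Set.Icc (-ρ) ρ) u) := by
  have hb : 0 < 1 - β := by linarith
  have ha : 0 < 2 * s / (1 - β) := by positivity
  have ha1 : 2 * s / (1 - β) ≤ 1 := (div_le_one hb).2 h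
  have h2e : 2 * s = 2 * s / (1 - β) * (1 - β) := by field_simp
  generalize 2 * s / (1 - β) = a at *
  have h2 : 2 * s < a := by nlinarith
  have hs1 : s ≤ 1 / 2 := by linarith
  have hs1' : s ≤ 1 := by linarith
  have hβ : β = (a - 2 * s) / a := by rw [h2e]; field_simp; ring
  obtain ⟨f, hf, hfu⟩ := FL.f_exists hs0 hs1 ha ha1 h2 hβ hβ0 hβ1
  refine ⟨FL.uu s a, f, ⟨2 * Real.pi, by positivity, FL.uu_periodic hs0 hs1' ha ha1⟩,
    FL.uu_mem1 hs0 hs1' ha ha1, hf, fun x => ?_, fun ε ρ hε hρ => FL.not_mem hs0 hs1' ha ha1 hε hρ⟩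
  rw [hfu]
  exact FL.fl_at hs0 hs1' ha ha1 h2 x
end

section
/- Let 0<s<1, 0<β<1 with 2s < 1-β, and set r := 2s/(1-β) (so 0<2s<r<1). Let u:ℝ→ℝ be an 8-periodic function satisfying: (a) u(x) = -|x|^r for -1<x<0 and u(x) = x^r for 0≤x<1; (b) u is C^∞ on (-4,0)∪(0,4); (c) u is strictly increasing on (0,2); (d) u is odd with respect to x=0 and even with respect to x=2, i.e. u(-x)=-u(x) and u(2+x)=u(2-x) for all x; (e) sup{u'(x) : x ∈ (1,2)} = u'(1) = inf{u'(x) : x ∈ (0,1)}; (f) there exists δ>0 such that u(x) = -(x-2)² + u(2) for all x ∈ (2-δ, 2+δ). Define H(x) := ∫_{ℝ∖(-1/2,1/2)} (u(x+y) - u(x)) |y|^{-1-2s} dy. Then the map t ↦ H(t^{1/r}) is Lipschitz continuous on [0, 2^{-r}]. -/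
open MeasureTheory Filter Set

lemma aux_shift (u k : ℝ → ℝ) (M B a : ℝ) (hu : Continuous u) (hM : ∀ x, |u x| ≤ M)
    (hk0 : ∀ y, a < y → 0 ≤ k y) (hkB : ∀ y, a < y → k y ≤ B)
    (hanti : AntitoneOn k (Ioi a)) (hint : IntegrableOn k (Ioi a)) (x h : ℝ) (hh : 0 ≤ h) :
    |(∫ y in Ioi a, u (x + h + y) * k y) - ∫ y in Ioi a, u (x + y) * k y| ≤ 2 * M * B * h := by
  have hM0 : 0 ≤ M := (abs_nonneg _).trans (hM 0)
  have hsub : Ioi (a + h) ⊆ Ioi a := Ioi_subset_Ioi (by linarith)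
  have hintu : ∀ x, IntegrableOn (fun y => u (x + y) * k y) (Ioi a) := by
    intro x
    refine Integrable.bdd_mul (c := M) hint ?_ ?_
    · exact (hu.comp (by fun_prop : Continuous fun y : ℝ => x + y)).aestronglyMeasurable
    · exact Eventually.of_forall fun y => hM _
  have hpre : (fun z : ℝ => z - h) ⁻¹' Ioi a = Ioi (a + h) := by
    ext z; simp only [mem_preimage, mem_Ioi]; constructor <;> intro _ <;> linarith
  have mp : MeasurePreserving (fun z : ℝ => z - h) volume volume :=
    measurePreserving_sub_right volume h
  have me : MeasurableEmbedding (fun z : ℝ => z - h) := measurableEmbedding_subRight h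
  have hcv : ∀ g : ℝ → ℝ, ∫ z in Ioi (a + h), g (z - h) = ∫ y in Ioi a, g y := by
    intro g
    rw [← hpre]
    exact mp.setIntegral_preimage_emb me g (Ioi a)
  have hci : ∀ g : ℝ → ℝ, IntegrableOn g (Ioi a) → IntegrableOn (fun z => g (z - h)) (Ioi (a + h)) := by
    intro g hg
    rw [← hpre]
    exact (mp.integrableOn_comp_preimage me).2 hg
  have hsplit : ∀ g : ℝ → ℝ, IntegrableOn g (Ioi a) →
      ∫ y in Ioi a, g y = (∫ y in Ioc a (a + h), g y) + ∫ y in Ioi (a + h), g y := by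
    intro g hg
    rw [← Ioc_union_Ioi_eq_Ioi (show a ≤ a + h by linarith)]
    refine setIntegral_union Ioc_disjoint_Ioi_same measurableSet_Ioi
      (hg.mono_set Ioc_subset_Ioi_self) (hg.mono_set hsub)
  have hkI : |∫ y in Ioc a (a + h), k y| ≤ B * h := by
    have := norm_setIntegral_le_of_norm_le_const (μ := volume) (s := Ioc a (a + h)) (f := k) (C := B)
      (by simp) (fun y hy => by
        rw [Real.norm_eq_abs, abs_of_nonneg (hk0 y hy.1)]; exact hkB y hy.1)
    simpa [measureReal_def, hh] using this
  have huI : |∫ y in Ioc a (a + h), u (x + y) * k y| ≤ M * B * h := by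
    have := norm_setIntegral_le_of_norm_le_const (μ := volume) (s := Ioc a (a + h))
      (f := fun y => u (x + y) * k y) (C := M * B)
      (by simp) (fun y hy => by
        rw [Real.norm_eq_abs, abs_mul, abs_of_nonneg (hk0 y hy.1)]
        exact mul_le_mul (hM _) (hkB y hy.1) (hk0 y hy.1) hM0)
    simpa [measureReal_def, hh] using this
  have i1 : IntegrableOn (fun z => u (x + z) * k (z - h)) (Ioi (a + h)) := by
    have := hci _ (hintu (x + h))
    refine this.congr_fun (fun z _ => ?_) measurableSet_Ioi
    have hz : x + h + (z - h) = x + z := by ring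
    simp only [hz]
  have e1 : ∫ y in Ioi a, u (x + h + y) * k y = ∫ z in Ioi (a + h), u (x + z) * k (z - h) := by
    rw [← hcv]
    refine setIntegral_congr_fun measurableSet_Ioi (fun z _ => ?_)
    have hz : x + h + (z - h) = x + z := by ring
    simp only [hz]
  have i2 := (hintu x).mono_set hsub
  have ik1 := hci k hint
  have ik2 := hint.mono_set hsub
  have e3 : ∫ z in Ioi (a + h), (k (z - h) - k z) = ∫ y in Ioc a (a + h), k y := by
    rw [integral_sub ik1 ik2, hcv, hsplit k hint]; ring
  have e4 : |∫ z in Ioi (a + h), (u (x + z) * k (z - h) - u (x + z) * k z)| ≤ M * (B * h) := by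
    calc _ ≤ ∫ z in Ioi (a + h), M * (k (z - h) - k z) := by
          rw [← Real.norm_eq_abs]
          refine norm_integral_le_of_norm_le ((ik1.sub ik2).const_mul M) ?_
          refine (ae_restrict_iff' measurableSet_Ioi).2 (Eventually.of_forall fun z hz => ?_)
          have hz' : a + h < z := hz
          have hle : k z ≤ k (z - h) := hanti (by simp; linarith) (by simp; linarith) (by linarith)
          rw [← mul_sub, Real.norm_eq_abs, abs_mul, abs_of_nonneg (sub_nonneg.2 hle)]
          exact mul_le_mul_of_nonneg_right (hM _) (sub_nonneg.2 hle)
      _ = M * ∫ y in Ioc a (a + h), k y := by rw [integral_const_mul, e3]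
      _ ≤ M * (B * h) := mul_le_mul_of_nonneg_left ((le_abs_self _).trans hkI) hM0
  rw [integral_sub i1 i2] at e4
  rw [e1, hsplit _ (hintu x)]
  rw [abs_le] at *
  constructor <;> linarith [e4.1, e4.2, huI.1, huI.2]

lemma aux_shift' (u k : ℝ → ℝ) (M B a : ℝ) (hu : Continuous u) (hM : ∀ x, |u x| ≤ M)
    (hk0 : ∀ y, a < y → 0 ≤ k y) (hkB : ∀ y, a < y → k y ≤ B)
    (hanti : AntitoneOn k (Ioi a)) (hint : IntegrableOn k (Ioi a)) (x x' : ℝ) :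
    |(∫ y in Ioi a, u (x + y) * k y) - ∫ y in Ioi a, u (x' + y) * k y| ≤ 2 * M * B * |x - x'| := by
  rcases le_total x' x with h | h
  · have := aux_shift u k M B a hu hM hk0 hkB hanti hint x' (x - x') (by linarith)
    rw [abs_of_nonneg (sub_nonneg.2 h)]
    simpa using this
  · have := aux_shift u k M B a hu hM hk0 hkB hanti hint x (x' - x) (by linarith)
    rw [abs_sub_comm, abs_sub_comm x, abs_of_nonneg (sub_nonneg.2 h)]
    simpa using this

lemma aux_cont (r : ℝ) (hr : 0 < r) (u : ℝ → ℝ)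
    (hper : Function.Periodic u 8)
    (ha2 : ∀ x : ℝ, 0 ≤ x → x < 1 → u x = x ^ r)
    (hb1 : ContDiffOn ℝ (⊤ : ℕ∞) u (Set.Ioo (-4 : ℝ) 0))
    (hb2 : ContDiffOn ℝ (⊤ : ℕ∞) u (Set.Ioo (0 : ℝ) 4))
    (hd1 : ∀ x : ℝ, u (-x) = -u x)
    (hd2 : ∀ x : ℝ, u (2 + x) = u (2 - x)) : Continuous u := by
  have h0 : u 0 = 0 := by
    have := ha2 0 le_rfl one_pos
    rwa [Real.zero_rpow hr.ne'] at this
  have c0 : ContinuousAt u 0 := by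
    have hab : ∀ x : ℝ, |x| < 1 → |u x| = |x| ^ r := by
      intro x hx
      have h1 := ha2 |x| (abs_nonneg _) hx
      rcases abs_choice x with h | h
      · rw [h] at h1 ⊢
        rw [h1, abs_of_nonneg]
        exact Real.rpow_nonneg (h ▸ abs_nonneg x) _
      · rw [← h1, h, hd1, ← abs_neg, abs_of_nonneg]
        rw [← hd1, ← h, h1]
        exact Real.rpow_nonneg (abs_nonneg x) _
    have ht : Tendsto (fun x : ℝ => |x| ^ r) (nhds 0) (nhds 0) := by
      have : Continuous fun x : ℝ => |x| ^ r := continuous_abs.rpow_const (fun _ => Or.inr hr.le)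
      have h := this.tendsto 0
      simpa [Real.zero_rpow hr.ne'] using h
    rw [ContinuousAt, h0]
    rw [tendsto_zero_iff_abs_tendsto_zero]
    refine ht.congr' ?_
    filter_upwards [Metric.ball_mem_nhds (0 : ℝ) one_pos] with x hx
    rw [Function.comp, hab x (by simpa using hx)]
  have c1 : ∀ x ∈ Ioo (-4 : ℝ) 4, ContinuousAt u x := by
    intro x hx
    rcases lt_trichotomy x 0 with h | h | h
    · exact hb1.continuousOn.continuousAt (Ioo_mem_nhds hx.1 h)
    · exact h ▸ c0
    · exact hb2.continuousOn.continuousAt (Ioo_mem_nhds h hx.2)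
  have anti : ∀ x, u x = -u (x + 4) := by
    intro x
    have := hd2 (2 + x)
    rw [show 2 + (2 + x) = x + 4 by ring, show 2 - (2 + x) = -x by ring, hd1] at this
    rw [this, neg_neg]
  have c2 : ∀ x ∈ Ico (-4 : ℝ) 4, ContinuousAt u x := by
    intro x hx
    rcases eq_or_lt_of_le hx.1 with h | h
    · subst h
      have e : u = fun x => -u (x + 4) := funext anti
      rw [e]
      refine ContinuousAt.neg ?_
      refine ContinuousAt.comp (g := u) (f := fun x : ℝ => x + 4) ?_ (by fun_prop)
      simpa using c0
    · exact c1 x ⟨h, hx.2⟩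
  rw [continuous_iff_continuousAt]
  intro x
  obtain ⟨n, hn, -⟩ := existsUnique_add_zsmul_mem_Ico (show (0 : ℝ) < 8 by norm_num) x (-4)
  have e : u = fun y => u (y + n • (8 : ℝ)) := funext fun y => ((hper.zsmul n) y).symm
  rw [e]
  refine ContinuousAt.comp (g := u) (f := fun y : ℝ => y + n • (8 : ℝ)) (c2 _ ?_) (by fun_prop)
  rw [show (-4 : ℝ) + 8 = 4 by norm_num] at hn
  exact hn

lemma aux_rpow (q : ℝ) (hq : 1 < q) (x y : ℝ) (hx : x ∈ Icc (0 : ℝ) 1) (hy : y ∈ Icc (0 : ℝ) 1) :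
    |x ^ q - y ^ q| ≤ q * |x - y| := by
  have := Convex.norm_image_sub_le_of_norm_hasDerivWithin_le (f := fun x : ℝ => x ^ q)
    (f' := fun x => q * x ^ (q - 1)) (s := Icc (0 : ℝ) 1) (C := q) (x := y) (y := x)
    (fun z _ => (Real.hasDerivAt_rpow_const (Or.inr hq.le)).hasDerivWithinAt)
    (fun z hz => by
      have h1 : z ^ (q - 1) ≤ 1 := Real.rpow_le_one hz.1 hz.2 (by linarith)
      have h0 : 0 ≤ z ^ (q - 1) := Real.rpow_nonneg hz.1 _
      rw [Real.norm_eq_abs, abs_of_nonneg (by positivity)]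
      nlinarith) (convex_Icc 0 1) hy hx
  simpa using this

theorem stmt12 (s β r : ℝ) (hs0 : 0 < s) (hs1 : s < 1) (hβ0 : 0 < β) (hβ1 : β < 1)
    (h2s : 2 * s < 1 - β) (hr : r = 2 * s / (1 - β))
    (u : ℝ → ℝ)
    (hper : Function.Periodic u 8)
    (ha1 : ∀ x : ℝ, -1 < x → x < 0 → u x = -(|x| ^ r))
    (ha2 : ∀ x : ℝ, 0 ≤ x → x < 1 → u x = x ^ r)
    (hb1 : ContDiffOn ℝ (⊤ : ℕ∞) u (Set.Ioo (-4 : ℝ) 0))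
    (hb2 : ContDiffOn ℝ (⊤ : ℕ∞) u (Set.Ioo (0 : ℝ) 4))
    (hc : StrictMonoOn u (Set.Ioo (0 : ℝ) 2))
    (hd1 : ∀ x : ℝ, u (-x) = -u x)
    (hd2 : ∀ x : ℝ, u (2 + x) = u (2 - x))
    (he1 : sSup (deriv u '' Set.Ioo (1 : ℝ) 2) = deriv u 1)
    (he2 : sInf (deriv u '' Set.Ioo (0 : ℝ) 1) = deriv u 1)
    (hf : ∃ δ : ℝ, 0 < δ ∧ ∀ x ∈ Set.Ioo (2 - δ) (2 + δ), u x = -(x - 2) ^ 2 + u 2)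
    (H : ℝ → ℝ)
    (hH : ∀ x : ℝ,
      H x = ∫ y in {y : ℝ | 1 / 2 ≤ |y|}, (u (x + y) - u x) / |y| ^ (1 + 2 * s)) :
    ∃ K : NNReal, LipschitzOnWith K (fun t : ℝ => H (t ^ (1 / r)))
      (Set.Icc 0 ((2 : ℝ) ^ (-r))) := by
  have hr0 : 0 < r := by rw [hr]; exact div_pos (by linarith) (by linarith)
  have hr1 : r < 1 := by rw [hr, div_lt_one (by linarith)]; exact h2s
  have hu : Continuous u := aux_cont r hr0 u hper ha2 hb1 hb2 hd1 hd2
  obtain ⟨M, hM⟩ : ∃ M, ∀ x, |u x| ≤ M := by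
    have := (hper.compact_of_continuous (by norm_num) hu).isBounded
    obtain ⟨M, hM⟩ := isBounded_iff_forall_norm_le.1 this
    exact ⟨M, fun x => hM _ ⟨x, rfl⟩⟩
  have hM0 : 0 ≤ M := (abs_nonneg _).trans (hM 0)
  set k : ℝ → ℝ := fun y => y ^ (-(1 + 2 * s)) with hk
  set B : ℝ := (1 / 2 : ℝ) ^ (-(1 + 2 * s)) with hB
  have hB0 : 0 ≤ B := by positivity
  have hk0 : ∀ y, 1 / 2 < y → 0 ≤ k y := fun y hy => Real.rpow_nonneg (by linarith) _
  have hkB : ∀ y, 1 / 2 < y → k y ≤ B := fun y hy =>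
    Real.rpow_le_rpow_of_nonpos (by norm_num) hy.le (by linarith)
  have hanti : AntitoneOn k (Ioi (1 / 2)) := fun y hy z hz hyz =>
    Real.rpow_le_rpow_of_nonpos (by have : 1 / 2 < y := hy; linarith) hyz (by linarith)
  have hint : IntegrableOn k (Ioi (1 / 2)) := integrableOn_Ioi_rpow_of_lt (by linarith) (by norm_num)
  have hintu : ∀ x, IntegrableOn (fun y => u (x + y) * k y) (Ioi (1 / 2)) := by
    intro x
    refine Integrable.bdd_mul (c := M) hint ?_ ?_
    · exact (hu.comp (by fun_prop : Continuous fun y : ℝ => x + y)).aestronglyMeasurable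
    · exact Eventually.of_forall fun y => hM _
  set G : ℝ → ℝ := fun x => ∫ y in Ioi (1 / 2), u (x + y) * k y with hG
  set C : ℝ := ∫ y in Ioi (1 / 2), k y with hC
  have hGl : ∀ x x', |G x - G x'| ≤ 2 * M * B * |x - x'| :=
    aux_shift' u k M B (1 / 2) hu hM hk0 hkB hanti hint
  have hset : {y : ℝ | 1 / 2 ≤ |y|} = Iic (-(1 / 2)) ∪ Ici (1 / 2) := by
    ext y; simp only [mem_ofPred_eq, mem_union, mem_Iic, mem_Ici, le_abs]
    constructor
    · rintro (h | h)
      · right; exact h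
      · left; linarith
    · rintro (h | h)
      · right; linarith
      · left; exact h
  have hHG : ∀ x, H x = G x - G (-x) - 2 * C * u x := by
    intro x
    set F : ℝ → ℝ := fun y => (u (x + y) - u x) / |y| ^ (1 + 2 * s) with hF
    have f1 : ∀ y ∈ Ioi (1 / 2 : ℝ), u (x + y) * k y - u x * k y = F y := by
      intro y hy
      have hy' : 1 / 2 < y := hy
      simp only [hF, hk]
      rw [abs_of_pos (by linarith), Real.rpow_neg (by linarith)]
      ring
    have f2 : ∀ y ∈ Ioi (1 / 2 : ℝ), -(u (-x + y) * k y) - u x * k y = F (-y) := by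
      intro y hy
      have hy' : 1 / 2 < y := hy
      have h1 : u (-x + y) = -u (x + -y) := by rw [← hd1]; congr 1; ring
      simp only [hF, hk]
      rw [abs_neg, abs_of_pos (by linarith), Real.rpow_neg (by linarith), h1]
      ring
    have j1 : IntegrableOn F (Ioi (1 / 2)) :=
      ((hintu x).sub (hint.const_mul (u x))).congr_fun f1 measurableSet_Ioi
    have j2 : IntegrableOn (fun y => F (-y)) (Ioi (1 / 2)) :=
      ((hintu (-x)).neg.sub (hint.const_mul (u x))).congr_fun f2 measurableSet_Ioi
    have j3 : IntegrableOn F (Iic (-(1 / 2))) := by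
      have := (integrableOn_Ici_iff_integrableOn_Ioi (by simp)).2 j2
      have h := (Measure.measurePreserving_neg (volume : Measure ℝ)).integrableOn_comp_preimage
        (Homeomorph.neg ℝ).measurableEmbedding (f := F) (s := Iic (-(1 / 2)))
      refine h.1 ?_
      have hs : Neg.neg ⁻¹' Iic (-(1 / 2) : ℝ) = Ici (1 / 2) := by
        ext y; simp
      rw [hs]
      exact this
    have v1 : ∫ y in Ioi (1 / 2), F y = G x - C * u x := by
      rw [← setIntegral_congr_fun measurableSet_Ioi f1,
        integral_sub (hintu x) (hint.const_mul (u x)), integral_const_mul]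
      ring
    have v2 : ∫ y in Iic (-(1 / 2)), F y = -G (-x) - C * u x := by
      rw [← integral_comp_neg_Ioi, ← setIntegral_congr_fun measurableSet_Ioi f2,
        integral_sub (f := fun y => -(u (-x + y) * k y)) (hintu (-x)).neg (hint.const_mul (u x)), integral_const_mul, integral_neg]
      ring
    rw [hH, hset, setIntegral_union _ measurableSet_Ici j3
      ((integrableOn_Ici_iff_integrableOn_Ioi (by simp)).2 j1), integral_Ici_eq_integral_Ioi, v1, v2]
    · ring
    · rw [Set.disjoint_left]
      intro y h1 h2
      simp only [mem_Iic, mem_Ici] at h1 h2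
      linarith
  have hq : 1 < 1 / r := by rw [lt_div_iff₀ hr0]; linarith
  have hut : ∀ t ∈ Icc 0 ((2 : ℝ) ^ (-r)), u (t ^ (1 / r)) = t := by
    intro t ht
    have h1 : t ^ (1 / r) ≤ 1 / 2 := by
      calc t ^ (1 / r) ≤ ((2 : ℝ) ^ (-r)) ^ (1 / r) :=
            Real.rpow_le_rpow ht.1 ht.2 (by positivity)
        _ = 1 / 2 := by
            rw [← Real.rpow_mul (by norm_num), show -r * (1 / r) = -1 by field_simp,
              Real.rpow_neg_one]; norm_num
    rw [ha2 _ (Real.rpow_nonneg ht.1 _) (by linarith), ← Real.rpow_mul ht.1,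
      one_div_mul_cancel hr0.ne', Real.rpow_one]
  have hI : ∀ t ∈ Icc 0 ((2 : ℝ) ^ (-r)), t ∈ Icc (0 : ℝ) 1 := fun t ht =>
    ⟨ht.1, ht.2.trans (Real.rpow_le_one_of_one_le_of_nonpos (by norm_num) (by linarith))⟩
  have hC0 : 0 ≤ C := setIntegral_nonneg measurableSet_Ioi hk0
  refine ⟨Real.toNNReal (4 * M * B * (1 / r) + 2 * C), LipschitzOnWith.of_dist_le_mul ?_⟩
  intro t ht t' ht'
  rw [Real.coe_toNNReal _ (by positivity), Real.dist_eq, Real.dist_eq]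
  simp only [hHG]
  rw [hut t ht, hut t' ht']
  set a := t ^ (1 / r)
  set b := t' ^ (1 / r)
  have q1 := hGl a b
  have q2 := hGl (-a) (-b)
  have q3 : |a - b| ≤ (1 / r) * |t - t'| := aux_rpow _ hq t t' (hI t ht) (hI t' ht')
  rw [show -a - -b = -(a - b) by ring, abs_neg] at q2
  have q4 : 2 * M * B * |a - b| ≤ 2 * M * B * ((1 / r) * |t - t'|) :=
    mul_le_mul_of_nonneg_left q3 (by positivity)
  calc |G a - G (-a) - 2 * C * t - (G b - G (-b) - 2 * C * t')|
      = |(G a - G b) - (G (-a) - G (-b)) - 2 * C * (t - t')| := by congr 1; ring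
    _ ≤ |G a - G b| + |G (-a) - G (-b)| + |2 * C * (t - t')| :=
        (abs_sub _ _).trans (add_le_add_left (abs_sub _ _) _)
    _ ≤ (4 * M * B * (1 / r) + 2 * C) * |t - t'| := by
        rw [abs_mul, abs_of_nonneg (by positivity : 0 ≤ 2 * C)]
        nlinarith
end
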